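/- arXiv:math/0112273 — 2 statements merged into one kernel-verified Lean document; each statement's English description precedes it below -/
import Mathlib

section
/- Every block sequence (z_n) of (e_i) admits a normalized block sequence (y_n) of (z_n) (each y_n a norm-one finite linear combination of consecutive z_n's, with y₁ < y₂ < ⋯) which is equivalent to (e_n): there is C ≥ 1 such that (1/C)‖Σ α_i e_i‖ ≤ ‖Σ α_i y_i‖ ≤ C‖Σ α_i e_i‖ for all finitely supported real scalars (α_i). -/
abbrev c00 : Type := ℕ →₀ ℝ

noncomputable def flog (x : ℝ) : ℝ := Real.logb 2 (x + 1)

noncomputable def supNorm (x : c00) : ℝ := ⨆ i, |x i|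

def proj (E : Finset ℕ) (x : c00) : c00 := x.filter (· ∈ E)

def FLt (A B : Finset ℕ) : Prop := ∀ a ∈ A, ∀ b ∈ B, a < b

def IsNormC00 (N : c00 → ℝ) : Prop :=
  (∀ x, N x = 0 ↔ x = 0) ∧ (∀ x y, N (x + y) ≤ N x + N y) ∧
    ∀ (a : ℝ) (x : c00), N (a • x) = |a| * N x

def schSet (N : c00 → ℝ) (x : c00) : Set ℝ :=
  {s | ∃ n : ℕ, 2 ≤ n ∧ ∃ E : Fin n → Finset ℕ,
    (∀ i j : Fin n, i < j → FLt (E i) (E j)) ∧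
    s = (flog n)⁻¹ * ∑ i, N (proj (E i) x)}

def IsSchlumprechtNorm (N : c00 → ℝ) : Prop :=
  IsNormC00 N ∧ ∀ x : c00, IsLUB (insert (supNorm x) (schSet N x)) (N x)

def IsBlockSeq (x : ℕ → c00) : Prop :=
  (∀ n, x n ≠ 0) ∧ ∀ n, ∀ i ∈ (x n).support, ∀ j ∈ (x (n+1)).support, i < j

def SeqEquiv (N : c00 → ℝ) (u v : ℕ → c00) : Prop :=
  ∃ c : ℝ, 1 ≤ c ∧ ∀ a : ℕ →₀ ℝ,
    (1 / c) * N (a.sum fun i t => t • u i) ≤ N (a.sum fun i t => t • v i) ∧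
    N (a.sum fun i t => t • v i) ≤ c * N (a.sum fun i t => t • u i)

/-!
Along `(z_n)` one finds normalized averages of `ℓ₁ᵏ` type for every `k`: otherwise the norms of
sums of `k ^ p` consecutive normalized blocks would grow by a factor less than `k / 2` at each
step, which is impossible, since they are at least `k ^ p / flog (k ^ p)` and
`flog (k ^ p) < 2 ^ p` for large `p`. Choose such averages `y i`, with `k` growing rapidly. When
a vector is divided into `n` intervals, `y i` behaves like a multiple of `e i` as long as
`n ≤ ν i`, and is negligible as soon as `n ≥ ν (i + 1)`, so that at most one index lies in between.

The lower estimate holds with constant one for every normalized block sequence. For the upper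
estimate, let `b` be the vector with coordinates `|a i|` times the proportion of `y i` that lies
inside a finite set `D`. By induction on `D`, the norm of `∑ a i • y i` on `D` is bounded by a
multiple of `N (proj A b) + N (proj B b)`, maximized over `A < B`, up to small errors. Taking a pair
of sets makes room for the intermediate index: it is one member of the pair, the later indices are
the other. The multiple is `2 * (1 + 2⁻ᵐ)` when only indices `i ≥ m` are involved: the later indices
contribute with a larger `m`, which leaves room for the losses.
-/

section

open Finset

/-- A family of finite sets with `E i < E j` (in the sense of `FLt`) whenever `i < j`. -/
def Successive {ι : Type*} [LT ι] (E : ι → Finset ℕ) : Prop :=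
  ∀ ⦃i j⦄, i < j → FLt (E i) (E j)

/-- The part of `D` coloured `j` by `g`. For monotone `g` these parts are successive, and they
play the role of the intersections of `D` with consecutive intervals. -/
def fiber {n : ℕ} (g : ℕ → Fin n) (D : Finset ℕ) (j : Fin n) : Finset ℕ := {t ∈ D | g t = j}

theorem FLt.mono {A A' B B' : Finset ℕ} (h : FLt A B) (hA : A' ⊆ A) (hB : B' ⊆ B) : FLt A' B' :=
  fun a ha b hb => h a (hA ha) b (hB hb)

theorem Successive.mono {ι : Type*} [LT ι] {E F : ι → Finset ℕ} (hE : Successive E)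
    (h : ∀ i, F i ⊆ E i) : Successive F :=
  fun i j hij => (hE hij).mono (h i) (h j)

theorem Successive.comp_strictMono {ι κ : Type*} [Preorder ι] [Preorder κ] {E : ι → Finset ℕ}
    (hE : Successive E) {f : κ → ι} (hf : StrictMono f) : Successive (E ∘ f) :=
  fun _ _ hij => hE (hf hij)

theorem Successive.fLt_biUnion {F : ℕ → Finset ℕ} (hF : Successive F) {A B : Finset ℕ}
    (h : FLt A B) : FLt (A.biUnion F) (B.biUnion F) := by
  intro s hs t ht
  obtain ⟨i, hi, hs⟩ := mem_biUnion.1 hs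
  obtain ⟨j, hj, ht⟩ := mem_biUnion.1 ht
  exact hF (h i hi j hj) s hs t ht

theorem Successive.eq_of_mem {ι : Type*} [LinearOrder ι] {E : ι → Finset ℕ} (hE : Successive E)
    {i j : ι} {t : ℕ} (hi : t ∈ E i) (hj : t ∈ E j) : i = j := by
  rcases lt_trichotomy i j with h | h | h
  · exact absurd (hE h t hi t hj) (lt_irrefl t)
  · exact h
  · exact absurd (hE h t hj t hi) (lt_irrefl t)

theorem Successive.disjoint {ι : Type*} [LinearOrder ι] {E : ι → Finset ℕ} (hE : Successive E)
    {i j : ι} (hij : i ≠ j) : Disjoint (E i) (E j) :=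
  disjoint_left.2 fun _ hi hj => hij (hE.eq_of_mem hi hj)

theorem mem_fiber {n : ℕ} {g : ℕ → Fin n} {D : Finset ℕ} {j : Fin n} {t : ℕ} :
    t ∈ fiber g D j ↔ t ∈ D ∧ g t = j :=
  mem_filter

theorem fiber_subset {n : ℕ} (g : ℕ → Fin n) (D : Finset ℕ) (j : Fin n) : fiber g D j ⊆ D :=
  filter_subset _ _

theorem successive_fiber {n : ℕ} {g : ℕ → Fin n} (hg : Monotone g) (D : Finset ℕ) :
    Successive (fiber g D) := by
  intro i j hij a ha b hb
  rw [mem_fiber] at ha hb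
  exact hg.reflect_lt (by rwa [ha.2, hb.2])

theorem sum_sum_fiber {n : ℕ} {M : Type*} [AddCommMonoid M] (g : ℕ → Fin n) (D : Finset ℕ)
    (f : ℕ → M) : ∑ j, ∑ t ∈ fiber g D j, f t = ∑ t ∈ D, f t :=
  sum_fiberwise D g f

theorem Successive.exists_monotone_forall_mem {n : ℕ} [NeZero n] {E : Fin n → Finset ℕ}
    (hE : Successive E) : ∃ g : ℕ → Fin n, Monotone g ∧ ∀ p, ∀ t ∈ E p, g t = p := by
  let s : ℕ → Finset (Fin n) := fun t => {p | ∃ r ∈ E p, r ≤ t}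
  refine ⟨fun t => (s t).sup id, fun t t' htt' => sup_mono fun p hp => ?_, fun p t ht => ?_⟩
  · obtain ⟨r, hr, hrt⟩ := (mem_filter.1 hp).2
    exact mem_filter.2 ⟨mem_univ p, r, hr, hrt.trans htt'⟩
  · refine le_antisymm (Finset.sup_le fun q hq => ?_)
      (le_sup (f := id) (mem_filter.2 ⟨mem_univ p, t, ht, le_rfl⟩))
    obtain ⟨r, hr, hrt⟩ := (mem_filter.1 hq).2
    exact not_lt.1 fun hpq => (hE hpq t ht r hr).not_ge hrt

theorem proj_apply (E : Finset ℕ) (x : c00) (i : ℕ) : proj E x i = if i ∈ E then x i else 0 :=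
  Finsupp.filter_apply ..

theorem proj_add (E : Finset ℕ) (x y : c00) : proj E (x + y) = proj E x + proj E y :=
  Finsupp.filter_add

theorem proj_smul (E : Finset ℕ) (a : ℝ) (x : c00) : proj E (a • x) = a • proj E x :=
  Finsupp.filter_smul

theorem proj_sum {ι : Type*} (E : Finset ℕ) (s : Finset ι) (x : ι → c00) :
    proj E (∑ i ∈ s, x i) = ∑ i ∈ s, proj E (x i) :=
  map_sum (Finsupp.filterAddHom (· ∈ E)) x s

theorem proj_proj_of_subset {E F : Finset ℕ} (h : E ⊆ F) (x : c00) :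
    proj E (proj F x) = proj E x := by
  ext i
  simp only [proj_apply]
  split_ifs with hE hF
  · rfl
  · exact absurd (h hE) hF
  · rfl

theorem proj_eq_self {E : Finset ℕ} {x : c00} (h : x.support ⊆ E) : proj E x = x :=
  (Finsupp.filter_eq_self_iff _ _).2 fun _ hi => h (Finsupp.mem_support_iff.2 hi)

theorem proj_eq_zero {E : Finset ℕ} {x : c00} (h : Disjoint x.support E) : proj E x = 0 :=
  (Finsupp.filter_eq_zero_iff _ _).2 fun _ hiE =>
    Finsupp.notMem_support_iff.1 fun hi => Finset.disjoint_left.1 h hi hiE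

theorem support_proj_subset (E : Finset ℕ) (x : c00) : (proj E x).support ⊆ E := by
  intro i hi
  by_contra h
  exact Finsupp.mem_support_iff.1 hi (by rw [proj_apply, if_neg h])

theorem flog_le_flog {x y : ℝ} (hx : 0 ≤ x) (h : x ≤ y) : flog x ≤ flog y :=
  Real.logb_le_logb_of_le one_lt_two (by linarith) (by linarith)

theorem flog_one : flog 1 = 1 := by norm_num [flog]

theorem one_le_flog {x : ℝ} (h : 1 ≤ x) : 1 ≤ flog x :=
  flog_one.symm.trans_le (flog_le_flog zero_le_one h)

theorem flog_natCast_pos {n : ℕ} (hn : 1 ≤ n) : 0 < flog n :=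
  zero_lt_one.trans_le (one_le_flog (by exact_mod_cast hn))

theorem one_lt_flog_two : 1 < flog 2 :=
  flog_one.symm.trans_lt (Real.logb_lt_logb one_lt_two (by norm_num) (by norm_num))

theorem flog_two_mul_le {x : ℝ} (hx : 0 ≤ x) : flog (2 * x) ≤ flog x + 1 := by
  have h : flog x + 1 = Real.logb 2 ((x + 1) * 2) := by
    rw [Real.logb_mul (by positivity) two_ne_zero, Real.logb_self_eq_one one_lt_two, flog]
  rw [h]
  exact Real.logb_le_logb_of_le one_lt_two (by positivity) (by linarith)

theorem abs_le_supNorm (x : c00) (i : ℕ) : |x i| ≤ supNorm x := by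
  refine le_ciSup (f := fun i => |x i|) ⟨∑ j ∈ x.support, |x j|, ?_⟩ i
  rintro _ ⟨j, rfl⟩
  by_cases hj : j ∈ x.support
  · exact single_le_sum (f := fun j => |x j|) (fun _ _ => abs_nonneg _) hj
  · simpa [Finsupp.notMem_support_iff.1 hj] using sum_nonneg fun j _ => abs_nonneg (x j)

theorem supNorm_le {x : c00} {R : ℝ} (h : ∀ i, |x i| ≤ R) : supNorm x ≤ R :=
  ciSup_le h

theorem sum_abs_le_sum_support_abs (x : c00) (D : Finset ℕ) :
    ∑ t ∈ D, |x t| ≤ ∑ t ∈ x.support, |x t| := by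
  rw [← sum_filter_of_ne (p := (· ∈ x.support)) fun t _ ht => by
    exact Finsupp.mem_support_iff.2 (abs_ne_zero.1 ht)]
  exact sum_le_sum_of_subset_of_nonneg (fun t ht => (mem_filter.1 ht).2) fun _ _ _ => abs_nonneg _

namespace IsSchlumprechtNorm

variable {N : c00 → ℝ} (hN : IsSchlumprechtNorm N)
include hN

theorem map_zero : N 0 = 0 := (hN.1.1 0).2 rfl

theorem map_add_le (x y : c00) : N (x + y) ≤ N x + N y := hN.1.2.1 x y

theorem map_smul (a : ℝ) (x : c00) : N (a • x) = |a| * N x := hN.1.2.2 a x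

theorem abs_apply_le (x : c00) (i : ℕ) : |x i| ≤ N x :=
  (abs_le_supNorm x i).trans ((hN.2 x).1 (Set.mem_insert _ _))

theorem map_nonneg (x : c00) : 0 ≤ N x := (abs_nonneg _).trans (hN.abs_apply_le x 0)

theorem map_pos {x : c00} (hx : x ≠ 0) : 0 < N x :=
  (hN.map_nonneg x).lt_of_ne fun h => hx ((hN.1.1 x).1 h.symm)

theorem map_sum_le {ι : Type*} (s : Finset ι) (x : ι → c00) :
    N (∑ i ∈ s, x i) ≤ ∑ i ∈ s, N (x i) :=
  le_sum_of_subadditive N hN.map_zero.le hN.map_add_le s x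

theorem sum_map_proj_le_of_two_le (x : c00) {n : ℕ} (hn : 2 ≤ n) {E : Fin n → Finset ℕ}
    (hE : Successive E) : ∑ p, N (proj (E p) x) ≤ flog n * N x := by
  rw [← inv_mul_le_iff₀ (flog_natCast_pos (by lia))]
  exact (hN.2 x).1 (Or.inr ⟨n, hn, E, fun _ _ => @hE _ _, rfl⟩)

theorem map_le_of_forall_sum_le_or {x : c00} {R : ℝ} (hsup : ∀ i, |x i| ≤ R)
    (hsum : ∀ n : ℕ, 2 ≤ n → ∀ E : Fin n → Finset ℕ, Successive E →
      ∑ p, N (proj (E p) x) ≤ flog n * R ∨ ∑ p, N (proj (E p) x) ≤ N x) :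
    N x ≤ R := by
  have h2 := one_lt_flog_two
  have key : N x ≤ max R ((flog 2)⁻¹ * N x) := by
    refine (hN.2 x).2 ?_
    rintro s (rfl | ⟨n, hn, E, hE, rfl⟩)
    · exact le_max_of_le_left (supNorm_le hsup)
    rcases hsum n hn E fun _ _ => hE _ _ with h | h
    · exact le_max_of_le_left ((inv_mul_le_iff₀ (flog_natCast_pos (by lia))).2 h)
    · have h2n : flog 2 ≤ flog n := flog_le_flog zero_le_two (by exact_mod_cast hn)
      exact le_max_of_le_right (mul_le_mul (inv_anti₀ (by linarith) h2n) h
        (sum_nonneg fun _ _ => hN.map_nonneg _) (by positivity))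
  rcases le_max_iff.1 key with h | h
  · exact h
  · have hθ : (flog 2)⁻¹ < 1 := inv_lt_one_of_one_lt₀ h2
    nlinarith [hN.map_nonneg x, (abs_nonneg _).trans (hsup 0)]

theorem sum_map_proj_eq {ι : Type*} [LinearOrder ι] [Fintype ι] {E : ι → Finset ℕ}
    (hE : Successive E) {x : c00} {j : ι} (h : x.support ⊆ E j) :
    ∑ p, N (proj (E p) x) = N x := by
  rw [Fintype.sum_eq_single j, proj_eq_self h]
  intro p hpj
  rw [proj_eq_zero ((hE.disjoint hpj.symm).mono_left h), hN.map_zero]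

theorem map_proj_le_of_forall_sum_le_or {x : c00} {D : Finset ℕ} {R : ℝ} (hR : 0 ≤ R)
    (hsup : ∀ t ∈ D, |x t| ≤ R)
    (hsum : ∀ n : ℕ, 2 ≤ n → ∀ E : Fin n → Finset ℕ, Successive E → (∀ p, E p ⊆ D) →
      ∑ p, N (proj (E p) x) ≤ flog n * R ∨ ∑ p, N (proj (E p) x) ≤ N (proj D x)) :
    N (proj D x) ≤ R := by
  refine hN.map_le_of_forall_sum_le_or (fun t => ?_) fun n hn E hE => ?_
  · rw [proj_apply]
    split_ifs with ht
    · exact hsup t ht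
    · rwa [abs_zero]
  · have hproj (p : Fin n) : proj (E p) (proj D x) = proj (E p ∩ D) x := by
      ext t
      simp only [proj_apply, mem_inter, ite_and]
    simp only [hproj]
    exact hsum n hn _ (hE.mono fun _ => inter_subset_left) fun _ => inter_subset_right

theorem map_proj_le_of_forall_ssubset {x : c00} {D : Finset ℕ} {R : ℝ} (hR : 0 ≤ R)
    (hsup : ∀ t ∈ D, |x t| ≤ R)
    (hsum : ∀ n : ℕ, 2 ≤ n → ∀ E : Fin n → Finset ℕ, Successive E → (∀ p, E p ⊂ D) →
      ∑ p, N (proj (E p) x) ≤ flog n * R) :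
    N (proj D x) ≤ R := by
  refine hN.map_proj_le_of_forall_sum_le_or hR hsup fun n hn E hE hED => ?_
  by_cases h : ∃ j, E j = D
  · obtain ⟨j, hj⟩ := h
    refine Or.inr (le_of_eq ?_)
    rw [← hN.sum_map_proj_eq hE ((support_proj_subset D x).trans hj.ge)]
    simp only [proj_proj_of_subset (hED _)]
  · push Not at h
    exact Or.inl (hsum n hn E hE fun p => (hED p).ssubset_of_ne (h p))

theorem map_proj_le_map_proj {x y : c00} (h : ∀ i, |x i| ≤ |y i|) (D : Finset ℕ) :
    N (proj D x) ≤ N (proj D y) := by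
  induction D using Finset.strongInduction with | _ D ih
  refine hN.map_proj_le_of_forall_ssubset (hN.map_nonneg _) (fun t ht => ?_)
    fun n hn E hE hED => ?_
  · have hyt : proj D y t = y t := by rw [proj_apply, if_pos ht]
    exact (h t).trans (hyt ▸ hN.abs_apply_le (proj D y) t)
  · calc ∑ p, N (proj (E p) x) ≤ ∑ p, N (proj (E p) (proj D y)) :=
          sum_le_sum fun p _ => by
            rw [proj_proj_of_subset (hED p).1]
            exact ih _ (hED p)
      _ ≤ flog n * N (proj D y) := hN.sum_map_proj_le_of_two_le _ hn hE

theorem mono {x y : c00} (h : ∀ i, |x i| ≤ |y i|) : N x ≤ N y := by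
  have hxy := hN.map_proj_le_map_proj h (x.support ∪ y.support)
  rwa [proj_eq_self subset_union_left, proj_eq_self subset_union_right] at hxy

theorem map_proj_le (E : Finset ℕ) (x : c00) : N (proj E x) ≤ N x := by
  refine hN.mono fun i => ?_
  rw [proj_apply]
  split_ifs
  · rfl
  · simp

theorem map_proj_mono {D E : Finset ℕ} (h : D ⊆ E) (x : c00) : N (proj D x) ≤ N (proj E x) := by
  rw [← proj_proj_of_subset h]
  exact hN.map_proj_le D _

theorem map_single (i : ℕ) (a : ℝ) : N (Finsupp.single i a) = |a| := by
  refine le_antisymm ?_ (by simpa using hN.abs_apply_le (Finsupp.single i a) i)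
  rw [← proj_eq_self (Finsupp.support_single_subset (a := i) (b := a))]
  refine hN.map_proj_le_of_forall_ssubset (abs_nonneg a) (fun t ht => ?_) fun n hn E _ hE => ?_
  · simp [mem_singleton.1 ht]
  · rw [sum_eq_zero fun p _ => by
      rw [ssubset_singleton_iff.1 (hE p), proj_eq_zero (disjoint_empty_right _), hN.map_zero]]
    exact mul_nonneg (flog_natCast_pos (by lia)).le (abs_nonneg a)

theorem map_le_sum_abs (x : c00) : N x ≤ ∑ t ∈ x.support, |x t| := by
  calc N x = N (∑ t ∈ x.support, Finsupp.single t (x t)) := congrArg N x.sum_single.symm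
    _ ≤ ∑ t ∈ x.support, N (Finsupp.single t (x t)) := hN.map_sum_le _ _
    _ = ∑ t ∈ x.support, |x t| := sum_congr rfl fun t _ => hN.map_single t _

theorem map_proj_le_sum_abs (D : Finset ℕ) (x : c00) : N (proj D x) ≤ ∑ t ∈ D, |x t| := by
  refine (hN.map_le_sum_abs _).trans ((sum_le_sum_of_subset_of_nonneg (support_proj_subset D x)
    fun _ _ _ => abs_nonneg _).trans (sum_le_sum fun t ht => ?_))
  rw [proj_apply, if_pos ht]

theorem sum_map_proj_le {ι : Type*} [LinearOrder ι] (x : c00) {s : Finset ι} (hs : s.Nonempty)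
    {E : ι → Finset ℕ} (hE : Successive E) :
    ∑ i ∈ s, N (proj (E i) x) ≤ flog #s * N x := by
  rcases Nat.lt_or_ge #s 2 with h | h
  · obtain ⟨i, rfl⟩ := card_eq_one.1 (le_antisymm (Nat.lt_succ_iff.1 h) hs.card_pos)
    simpa [flog_one] using hN.map_proj_le (E i) x
  · let e := s.orderIsoOfFin rfl
    have hsum : ∑ i ∈ s, N (proj (E i) x) = ∑ p, N (proj (E (e p)) x) := by
      rw [← sum_coe_sort s, ← e.toEquiv.sum_comp]
      rfl
    rw [hsum]
    exact hN.sum_map_proj_le_of_two_le x h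
      (hE.comp_strictMono ((Subtype.strictMono_coe _).comp e.strictMono))

theorem sum_map_proj_fiber_le {n : ℕ} (hn : 1 ≤ n) {g : ℕ → Fin n} (hg : Monotone g)
    (D : Finset ℕ) (x : c00) :
    ∑ j, N (proj (fiber g D j) x) ≤ flog n * N (proj D x) := by
  have : NeZero n := ⟨by lia⟩
  have h := hN.sum_map_proj_le (proj D x) univ_nonempty (successive_fiber hg D)
  simpa only [proj_proj_of_subset (fiber_subset g D _), card_univ, Fintype.card_fin] using h

theorem map_proj_le_of_forall_fiber {x : c00} {D : Finset ℕ} {R : ℝ} (hR : 0 ≤ R)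
    (hsup : ∀ t ∈ D, |x t| ≤ R)
    (hsum : ∀ n : ℕ, 2 ≤ n → ∀ g : ℕ → Fin n, Monotone g → (∀ j, fiber g D j ⊂ D) →
      ∑ j, N (proj (fiber g D j) x) ≤ flog n * R) :
    N (proj D x) ≤ R := by
  refine hN.map_proj_le_of_forall_sum_le_or hR hsup fun n hn E hE hED => ?_
  have : NeZero n := ⟨by lia⟩
  obtain ⟨g, hg, hgE⟩ := hE.exists_monotone_forall_mem
  have hle : ∑ p, N (proj (E p) x) ≤ ∑ p, N (proj (fiber g D p) x) :=
    sum_le_sum fun p _ => hN.map_proj_mono (fun t ht => mem_fiber.2 ⟨hED p ht, hgE p t ht⟩) x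
  by_cases h : ∃ j, fiber g D j = D
  · obtain ⟨j, hj⟩ := h
    refine Or.inr (hle.trans (le_of_eq ?_))
    rw [← hN.sum_map_proj_eq (successive_fiber hg D) ((support_proj_subset D x).trans hj.ge)]
    simp only [proj_proj_of_subset (fiber_subset g D _)]
  · push Not at h
    exact Or.inl (hle.trans (hsum n hn g hg fun j => (fiber_subset g D j).ssubset_of_ne (h j)))

end IsSchlumprechtNorm

/-! ### Fractional splittings and the pair norm -/

theorem linearMap_apply_eq_sum (φ : c00 →ₗ[ℝ] ℝ) {x : c00} {U : Finset ℕ} (h : x.support ⊆ U) :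
    φ x = ∑ i ∈ U, x i * φ (Finsupp.single i 1) := by
  conv_lhs => rw [← x.sum_single]
  rw [Finsupp.sum_of_support_subset x h _ fun _ _ => Finsupp.single_zero _, map_sum]
  refine sum_congr rfl fun i _ => ?_
  rw [← smul_eq_mul, ← map_smul, Finsupp.smul_single_one]

theorem exists_forall_imp_and_le {ι : Type*} [Finite ι] [Nonempty ι] (P : ι → Prop) (f : ι → ℝ) :
    ∃ p, ∀ q, P q → P p ∧ f q ≤ f p := by
  rcases {p | P p}.eq_empty_or_nonempty with h | h
  · exact ⟨Classical.arbitrary ι, fun q hq => absurd hq (Set.eq_empty_iff_forall_notMem.1 h q)⟩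
  · obtain ⟨p, hp, hmax⟩ := Set.exists_max_image _ f (Set.toFinite _) h
    exact ⟨p, fun q hq => ⟨hp, hmax q hq⟩⟩

/-- Nonnegative vectors `b p` with coordinatewise sum at most `B`, whose supports are consecutive
but may share end points. The masses of an average on consecutive intervals are
of this form, one coordinate being divided between several intervals. -/
structure IsFractionalSplitting {ι : Type*} [LT ι] [Fintype ι] (b : ι → c00) (B : c00) :
    Prop where
  nonneg : ∀ p i, 0 ≤ b p i
  le_of_lt : ∀ ⦃p q⦄, p < q → ∀ i ∈ (b p).support, ∀ i' ∈ (b q).support, i ≤ i'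
  sum_le : ∀ i, ∑ p, b p i ≤ B i

theorem IsFractionalSplitting.proj_pair {ι : Type*} [LinearOrder ι] [Fintype ι] {b : ι → c00}
    {B : c00} (hb : IsFractionalSplitting b B) {L R : ι → Finset ℕ} (h : ∀ p, FLt (L p) (R p)) :
    IsFractionalSplitting
      (fun q : ι ×ₗ Bool => proj (cond (ofLex q).2 (R (ofLex q).1) (L (ofLex q).1)) (b (ofLex q).1))
      B where
  nonneg q i := by
    rw [proj_apply]
    split_ifs
    exacts [hb.nonneg _ i, le_rfl]
  le_of_lt := by
    have hsupp (E : Finset ℕ) (x : c00) {i : ℕ} (hi : i ∈ (proj E x).support) :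
        i ∈ E ∧ i ∈ x.support := by
      simpa [proj_apply] using hi
    intro p q hpq i hi i' hi'
    obtain ⟨hiE, hi⟩ := hsupp _ _ hi
    obtain ⟨hiE', hi'⟩ := hsupp _ _ hi'
    rcases Prod.Lex.lt_iff.1 hpq with hlt | ⟨heq, hlt⟩
    · exact hb.le_of_lt hlt i hi i' hi'
    · obtain ⟨hp, hq⟩ := Bool.lt_iff.1 hlt
      rw [hp, cond_false] at hiE
      rw [hq, cond_true, ← heq] at hiE'
      exact (h _ i hiE i' hiE').le
  sum_le i := by
    refine le_trans ?_ (hb.sum_le i)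
    rw [← toLex.sum_comp, Fintype.sum_prod_type]
    refine sum_le_sum fun p _ => ?_
    have hdisj (hR : i ∈ R p) (hL : i ∈ L p) : False := lt_irrefl i (h p i hL i hR)
    have := hb.nonneg p i
    simp only [Fintype.sum_bool, ofLex_toLex, cond_true, cond_false, proj_apply]
    split_ifs with hR hL
    · exact (hdisj hR hL).elim
    all_goals linarith

/-- The largest sum of the norms of two successive pieces of `b`. -/
noncomputable def pairNorm (N : c00 → ℝ) (b : c00) : ℝ :=
  sSup {r | ∃ A B, FLt A B ∧ r = N (proj A b) + N (proj B b)}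

theorem finite_pairSums (N : c00 → ℝ) (b : c00) :
    {r | ∃ A B, FLt A B ∧ r = N (proj A b) + N (proj B b)}.Finite := by
  refine ((b.support.powerset ×ˢ b.support.powerset).finite_toSet.image
    fun p => N (proj p.1 b) + N (proj p.2 b)).subset ?_
  rintro r ⟨A, B, -, rfl⟩
  have hinter (E : Finset ℕ) : proj (E ∩ b.support) b = proj E b := by
    ext i
    by_cases hi : b i = 0 <;> simp [proj_apply, hi]
  exact ⟨(A ∩ b.support, B ∩ b.support), by simp, by simp only [hinter]⟩

theorem le_pairNorm (N : c00 → ℝ) (b : c00) {A B : Finset ℕ} (h : FLt A B) :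
    N (proj A b) + N (proj B b) ≤ pairNorm N b :=
  le_csSup (finite_pairSums N b).bddAbove ⟨A, B, h, rfl⟩

theorem exists_pairNorm_eq (N : c00 → ℝ) (b : c00) :
    ∃ A B, FLt A B ∧ pairNorm N b = N (proj A b) + N (proj B b) :=
  Set.Nonempty.csSup_mem (s := {r | ∃ A B, FLt A B ∧ r = N (proj A b) + N (proj B b)})
    ⟨_, ∅, ∅, by simp [FLt], rfl⟩ (finite_pairSums N b)

namespace IsSchlumprechtNorm

variable {N : c00 → ℝ} (hN : IsSchlumprechtNorm N)
include hN

theorem exists_norming (v : c00) : ∃ φ : c00 →ₗ[ℝ] ℝ, (∀ x, φ x ≤ N x) ∧ φ v = N v := by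
  rcases eq_or_ne v 0 with rfl | hv
  · exact ⟨0, hN.map_nonneg, hN.map_zero.symm⟩
  obtain ⟨φ, hφ, hφN⟩ := exists_extension_of_le_sublinear
    (LinearPMap.mkSpanSingleton v (N v) hv) N
    (fun c hc x => by rw [hN.map_smul, abs_of_pos hc]) hN.map_add_le (by
      rintro ⟨x, hx⟩
      obtain ⟨t, rfl⟩ := Submodule.mem_span_singleton.1 hx
      refine (LinearPMap.mkSpanSingleton'_apply (R := ℝ) v (N v) _ t hx).trans_le ?_
      rw [hN.map_smul]
      exact mul_le_mul_of_nonneg_right (le_abs_self t) (hN.map_nonneg v))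
  exact ⟨φ, hφN, (hφ ⟨v, Submodule.mem_span_singleton_self v⟩).trans
    (LinearPMap.mkSpanSingleton_apply ℝ ℝ hv (N v))⟩

/- Each coordinate `i` is given entirely to the `p` whose norming functional is largest at `e_i`,
among those with `b p i ≠ 0`. -/
theorem exists_successive_sum_le_sum_map_proj {ι : Type*} [LinearOrder ι] [Fintype ι]
    {b : ι → c00} {B : c00} (hb : IsFractionalSplitting b B) :
    ∃ I : ι → Finset ℕ, Successive I ∧ ∑ p, N (b p) ≤ ∑ p, N (proj (I p) B) := by
  rcases isEmpty_or_nonempty ι with hι | hι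
  · exact ⟨isEmptyElim, fun p => isEmptyElim p, by simp⟩
  choose φ hφN hφb using fun p => hN.exists_norming (b p)
  choose g hg using fun i => exists_forall_imp_and_le (fun p => b p i ≠ 0)
    fun p => φ p (Finsupp.single i 1)
  let U : Finset ℕ := univ.biUnion fun p => (b p).support
  let I (p : ι) : Finset ℕ := {i ∈ U | g i = p}
  have hI {p i} (hi : i ∈ I p) : i ∈ (b p).support ∧ g i = p := by
    obtain ⟨hiU, hgi⟩ := mem_filter.1 hi
    obtain ⟨q, -, hq⟩ := mem_biUnion.1 hiU
    exact ⟨Finsupp.mem_support_iff.2 (hgi ▸ (hg i q (Finsupp.mem_support_iff.1 hq)).1), hgi⟩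
  refine ⟨I, fun p q hpq i hi i' hi' => ?_, ?_⟩
  · refine (hb.le_of_lt hpq i (hI hi).1 i' (hI hi').1).lt_of_ne ?_
    rintro rfl
    exact hpq.ne ((hI hi).2.symm.trans (hI hi').2)
  calc ∑ p, N (b p) = ∑ p, ∑ i ∈ U, b p i * φ p (Finsupp.single i 1) :=
        sum_congr rfl fun p _ => by
          rw [← hφb p, linearMap_apply_eq_sum (φ p)
            (subset_biUnion_of_mem (fun p => (b p).support) (mem_univ p))]
    _ = ∑ i ∈ U, ∑ p, b p i * φ p (Finsupp.single i 1) := sum_comm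
    _ ≤ ∑ i ∈ U, ∑ p, b p i * φ (g i) (Finsupp.single i 1) := by
        refine sum_le_sum fun i _ => sum_le_sum fun p _ => ?_
        rcases eq_or_ne (b p i) 0 with h | h
        · simp [h]
        · exact mul_le_mul_of_nonneg_left (hg i p h).2 (hb.nonneg p i)
    _ = ∑ p, ∑ i ∈ I p, (∑ q, b q) i * φ p (Finsupp.single i 1) := by
        rw [← sum_fiberwise U g]
        refine sum_congr rfl fun p _ => sum_congr rfl fun i hi => ?_
        rw [← sum_mul, Finsupp.finsetSum_apply, (mem_filter.1 hi).2]
    _ = ∑ p, φ p (proj (I p) (∑ q, b q)) := by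
        refine sum_congr rfl fun p _ => ?_
        rw [linearMap_apply_eq_sum _ (support_proj_subset _ _)]
        exact sum_congr rfl fun i hi => by rw [proj_apply, if_pos hi]
    _ ≤ ∑ p, N (proj (I p) B) := sum_le_sum fun p _ => (hφN p _).trans <|
        hN.map_proj_le_map_proj (fun i => ?_) _
  rw [Finsupp.finsetSum_apply, abs_of_nonneg (sum_nonneg fun q _ => hb.nonneg q i)]
  exact (hb.sum_le i).trans (le_abs_self _)

theorem pairNorm_nonneg (b : c00) : 0 ≤ pairNorm N b := by
  obtain ⟨A, B, -, h⟩ := exists_pairNorm_eq N b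
  exact h ▸ add_nonneg (hN.map_nonneg _) (hN.map_nonneg _)

theorem pairNorm_le (b : c00) : pairNorm N b ≤ 2 * N b := by
  obtain ⟨A, B, -, h⟩ := exists_pairNorm_eq N b
  linarith [hN.map_proj_le A b, hN.map_proj_le B b]

theorem abs_apply_add_map_filter_lt_le_pairNorm (b : c00) (i : ℕ) :
    |b i| + N (b.filter (i < ·)) ≤ pairNorm N b := by
  have hlt : FLt {i} {j ∈ b.support | i < j} := fun s hs t ht =>
    (mem_singleton.1 hs).trans_lt (mem_filter.1 ht).2
  refine le_trans (add_le_add ?_ (le_of_eq (congrArg N ?_))) (le_pairNorm N b hlt)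
  · simpa [proj_apply] using hN.abs_apply_le (proj {i} b) i
  · ext j
    by_cases hj : b j = 0 <;> simp [proj_apply, Finsupp.filter_apply, hj]

theorem exists_successive_sum_pairNorm_le {n : ℕ} {b : Fin n → c00} {B : c00}
    (hb : IsFractionalSplitting b B) :
    ∃ I : Fin (n + n) → Finset ℕ, Successive I ∧
      ∑ j, pairNorm N (b j) ≤ ∑ p, N (proj (I p) B) := by
  choose L R hLR hpair using fun j => exists_pairNorm_eq N (b j)
  obtain ⟨I, hI, hle⟩ := hN.exists_successive_sum_le_sum_map_proj (hb.proj_pair hLR)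
  let e : Fin (n + n) ≃o Fin n ×ₗ Bool :=
    Fintype.orderIsoFinOfCardEq _ (by simp [mul_two])
  refine ⟨I ∘ e, hI.comp_strictMono e.strictMono, ?_⟩
  calc ∑ j, pairNorm N (b j) = ∑ j, (N (proj (R j) (b j)) + N (proj (L j) (b j))) := by
        simp only [hpair, add_comm]
    _ ≤ ∑ q, N (proj (I q) B) := by
        refine le_of_eq_of_le ?_ hle
        rw [← toLex.sum_comp, Fintype.sum_prod_type]
        simp
    _ = ∑ p, N (proj ((I ∘ e) p) B) := (e.toEquiv.sum_comp fun q => N (proj (I q) B)).symm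

theorem sum_map_proj_le_mul_pairNorm {n : ℕ} (hn : 1 ≤ n) {E : Fin (n + n) → Finset ℕ}
    (hE : Successive E) (x : c00) : ∑ p, N (proj (E p) x) ≤ flog n * pairNorm N x := by
  have : NeZero n := ⟨by lia⟩
  have half {e : Fin n → Fin (n + n)} (he : StrictMono e) :
      ∑ p, N (proj (E (e p)) x) ≤ flog n * N (proj (univ.biUnion (E ∘ e)) x) := by
    have h := hN.sum_map_proj_le (proj (univ.biUnion (E ∘ e)) x) univ_nonempty
      (hE.comp_strictMono he)
    simp only [proj_proj_of_subset (subset_biUnion_of_mem (E ∘ e) (mem_univ _))] at h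
    simpa only [card_univ, Fintype.card_fin, Function.comp_apply] using h
  have hlt : FLt (univ.biUnion (E ∘ Fin.castAdd n)) (univ.biUnion (E ∘ Fin.natAdd n)) := by
    intro s hs t ht
    obtain ⟨p, -, hp⟩ := mem_biUnion.1 hs
    obtain ⟨q, -, hq⟩ := mem_biUnion.1 ht
    exact hE (Fin.lt_def.2 (p.2.trans_le (Nat.le_add_right n q))) s hp t hq
  rw [Fin.sum_univ_add]
  calc _ ≤ _ := add_le_add (half (Fin.strictMono_castAdd n)) (half (Fin.strictMono_natAdd n))
    _ ≤ flog n * pairNorm N x := by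
        rw [← mul_add]
        exact mul_le_mul_of_nonneg_left (le_pairNorm N x hlt) (flog_natCast_pos hn).le

theorem sum_pairNorm_le_mul_pairNorm {n : ℕ} (hn : 1 ≤ n) {b : Fin n → c00} {B : c00}
    (hb : IsFractionalSplitting b B) : ∑ j, pairNorm N (b j) ≤ flog n * pairNorm N B := by
  obtain ⟨I, hI, h⟩ := hN.exists_successive_sum_pairNorm_le hb
  exact h.trans (hN.sum_map_proj_le_mul_pairNorm hn hI B)

theorem sum_pairNorm_le_mul_norm {n : ℕ} (hn : 1 ≤ n) {b : Fin n → c00} {B : c00}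
    (hb : IsFractionalSplitting b B) : ∑ j, pairNorm N (b j) ≤ (flog n + 1) * N B := by
  have : NeZero n := ⟨by lia⟩
  obtain ⟨I, hI, h⟩ := hN.exists_successive_sum_pairNorm_le hb
  have hcard : flog #(univ : Finset (Fin (n + n))) ≤ flog n + 1 := by
    rw [card_univ, Fintype.card_fin, ← two_mul, Nat.cast_mul, Nat.cast_two]
    exact flog_two_mul_le n.cast_nonneg
  exact (h.trans (hN.sum_map_proj_le B univ_nonempty hI)).trans
    (mul_le_mul_of_nonneg_right hcard (hN.map_nonneg B))

end IsSchlumprechtNorm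

/-! ### Cutting the pieces of an average -/

/-- Bound for the number of pieces of a family of `s` equal pieces still to be cut, when the
family is divided repeatedly into at most `ν` intervals and every division damps the norm by
`(flog 2)⁻¹` at least: if the first `d` rounds are counted separately, fewer than `(2 * ν) ^ d`
pieces are cut in them, and what remains is damped by `(flog 2)⁻¹ ^ d`. -/
noncomputable def cutBound (ν : ℕ) (s : ℝ) : ℝ :=
  ⨅ d : ℕ, (flog 2)⁻¹ ^ d * s + ((2 * ν) ^ d - 1)

theorem inv_flog_two_pos : 0 < (flog 2)⁻¹ :=
  inv_pos.2 (zero_lt_one.trans one_lt_flog_two)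

theorem cutBound_term_nonneg {ν : ℕ} (hν : 1 ≤ ν) {s : ℝ} (hs : 0 ≤ s) (d : ℕ) :
    0 ≤ (flog 2)⁻¹ ^ d * s + ((2 * ν) ^ d - 1) := by
  have hν' : (1 : ℝ) ≤ ν := by exact_mod_cast hν
  have hcut : 1 ≤ (2 * ν : ℝ) ^ d := one_le_pow₀ (by linarith)
  have hdamp : 0 ≤ (flog 2)⁻¹ ^ d * s := mul_nonneg (pow_nonneg inv_flog_two_pos.le d) hs
  linarith

theorem cutBound_le {ν : ℕ} (hν : 1 ≤ ν) {s : ℝ} (hs : 0 ≤ s) (d : ℕ) :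
    cutBound ν s ≤ (flog 2)⁻¹ ^ d * s + ((2 * ν) ^ d - 1) :=
  ciInf_le ⟨0, Set.forall_mem_range.2 (cutBound_term_nonneg hν hs)⟩ d

theorem cutBound_nonneg {ν : ℕ} (hν : 1 ≤ ν) {s : ℝ} (hs : 0 ≤ s) : 0 ≤ cutBound ν s :=
  le_ciInf (cutBound_term_nonneg hν hs)

theorem sum_cutBound_le {ν n : ℕ} (hν : 1 ≤ ν) {t : Fin n → ℝ} (ht : ∀ j, 0 ≤ t j) (d : ℕ) :
    ∑ j, cutBound ν (t j) ≤ (flog 2)⁻¹ ^ d * ∑ j, t j + n * ((2 * ν) ^ d - 1) := by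
  refine (sum_le_sum fun j _ => cutBound_le hν (ht j) d).trans_eq ?_
  simp only [sum_add_distrib, mul_sum, sum_const, card_univ, Fintype.card_fin, nsmul_eq_mul]

theorem mul_pow_sub_one_add_mul_le {x y F p : ℝ} (hx : 0 ≤ x) (hxy : x ≤ y) (hy : 1 ≤ y)
    (hF : 1 ≤ F) (hp : p ≤ x) (d : ℕ) :
    x * ((2 * y) ^ d - 1) + F * p ≤ F * ((2 * y) ^ (d + 1) - 1) := by
  set X : ℝ := (2 * y) ^ d
  have hX : 1 ≤ X := one_le_pow₀ (by linarith)
  calc x * (X - 1) + F * p ≤ F * (x * (X - 1)) + F * x :=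
        add_le_add (le_mul_of_one_le_left (mul_nonneg hx (by linarith)) hF)
          (mul_le_mul_of_nonneg_left hp (by linarith))
    _ = F * (x * X) := by ring
    _ ≤ F * ((2 * y) ^ (d + 1) - 1) := by
        have hyX : 1 ≤ y * X := one_le_mul_of_one_le_of_one_le hy hX
        have hxX : x * X ≤ y * X := by gcongr
        gcongr
        rw [pow_succ', mul_assoc]
        linarith

theorem sum_cutBound_add_le {ν n : ℕ} (hn : 2 ≤ n) (hnν : n ≤ ν) {s p : ℝ} {t : Fin n → ℝ}
    (ht : ∀ j, 0 ≤ t j) (hp : 0 ≤ p) (hpn : p ≤ n) (hs : ∑ j, t j + p = s) :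
    ∑ j, cutBound ν (t j) + flog n * p ≤ flog n * cutBound ν s := by
  have hν : 1 ≤ ν := by lia
  have hF : 1 ≤ flog n := one_le_flog (by exact_mod_cast (by lia : 1 ≤ n))
  have hT : 0 ≤ ∑ j, t j := sum_nonneg fun j _ => ht j
  rw [← div_le_iff₀' (by linarith)]
  refine le_ciInf fun d => (div_le_iff₀' (by linarith)).2 ?_
  cases d with
  | zero =>
    have h0 := sum_cutBound_le hν ht 0
    simp only [pow_zero, one_mul, sub_self, mul_zero, add_zero] at h0 ⊢
    nlinarith
  | succ d =>
    have hF2 : 1 ≤ flog n * (flog 2)⁻¹ := by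
      rw [← div_eq_mul_inv, one_le_div₀ (zero_lt_one.trans one_lt_flog_two)]
      exact flog_le_flog zero_le_two (by exact_mod_cast hn)
    have hθ : 0 ≤ (flog 2)⁻¹ ^ d := pow_nonneg inv_flog_two_pos.le d
    have hdamp : (flog 2)⁻¹ ^ d * ∑ j, t j ≤ flog n * ((flog 2)⁻¹ ^ (d + 1) * s) :=
      calc (flog 2)⁻¹ ^ d * ∑ j, t j ≤ (flog 2)⁻¹ ^ d * s := by gcongr; linarith
        _ ≤ flog n * (flog 2)⁻¹ * ((flog 2)⁻¹ ^ d * s) :=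
          le_mul_of_one_le_left (mul_nonneg hθ (by linarith)) hF2
        _ = flog n * ((flog 2)⁻¹ ^ (d + 1) * s) := by ring
    have hcut := mul_pow_sub_one_add_mul_le (Nat.cast_nonneg n) (Nat.cast_le.2 hnν)
      (Nat.one_le_cast.2 hν) hF hpn d
    linarith [sum_cutBound_le hν ht d]

section Pieces

variable {ι : Type*} [Fintype ι] (u : ι → c00)

/-- The pieces `u l` that are supported inside `D`. -/
def piecesIn (D : Finset ℕ) : Finset ι := {l | (u l).support ⊆ D}

/-- The pieces supported inside `D`, but inside none of the fibers of `g`. -/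
def cutPieces {n : ℕ} (g : ℕ → Fin n) (D : Finset ℕ) : Finset ι :=
  {l ∈ piecesIn u D | ¬∃ j, (u l).support ⊆ fiber g D j}

variable {u}

theorem mem_piecesIn {D : Finset ℕ} {l : ι} : l ∈ piecesIn u D ↔ (u l).support ⊆ D := by
  simp [piecesIn]

theorem card_piecesIn_le (D : Finset ℕ) : #(piecesIn u D) ≤ Fintype.card ι :=
  card_le_univ _

theorem exists_lt_of_mem_cutPieces (hu : ∀ l, u l ≠ 0) {n : ℕ} {g : ℕ → Fin n} {D : Finset ℕ}
    {l : ι} (hl : l ∈ cutPieces u g D) :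
    ∃ s ∈ (u l).support, ∃ t ∈ (u l).support, g s < g t := by
  obtain ⟨hlD, hcut⟩ := mem_filter.1 hl
  obtain ⟨r, hr⟩ := Finsupp.support_nonempty_iff.2 (hu l)
  obtain ⟨s, hs, hsr⟩ := not_subset.1 fun h => hcut ⟨g r, h⟩
  have hne : g s ≠ g r := fun h => hsr (mem_fiber.2 ⟨mem_piecesIn.1 hlD hs, h⟩)
  rcases hne.lt_or_gt with h | h
  exacts [⟨s, hs, r, hr, h⟩, ⟨r, hr, s, hs, h⟩]

theorem card_cutPieces_le [LinearOrder ι] (hu : ∀ l, u l ≠ 0)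
    (hsucc : Successive fun l => (u l).support) {n : ℕ} {g : ℕ → Fin n} (hg : Monotone g)
    (D : Finset ℕ) : #(cutPieces u g D) ≤ n := by
  choose s hs t ht hst using
    fun l : cutPieces u g D => exists_lt_of_mem_cutPieces hu l.2
  have hmono : StrictMono fun l => g (s l) := fun l l' hll' =>
    (hst l).trans_le (hg (hsucc hll' _ (ht l) _ (hs l')).le)
  simpa using Fintype.card_le_of_injective _ hmono.injective

theorem sum_card_piecesIn_add_card_cutPieces (hu : ∀ l, u l ≠ 0) {n : ℕ} (g : ℕ → Fin n)
    (D : Finset ℕ) :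
    ∑ j, #(piecesIn u (fiber g D j)) + #(cutPieces u g D) = #(piecesIn u D) := by
  classical
  rw [← card_filter_add_card_filter_not (s := piecesIn u D)
    fun l => ∃ j, (u l).support ⊆ fiber g D j, cutPieces, ← card_biUnion]
  · congr 2
    ext l
    simp only [mem_biUnion, mem_univ, true_and, mem_filter, mem_piecesIn]
    exact ⟨fun ⟨j, hj⟩ => ⟨hj.trans (fiber_subset g D j), j, hj⟩, And.right⟩
  · refine fun i _ j _ hij => Finset.disjoint_left.2 fun l hi hj => hij ?_
    obtain ⟨r, hr⟩ := Finsupp.support_nonempty_iff.2 (hu l)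
    exact (mem_fiber.1 (mem_piecesIn.1 hi hr)).2.symm.trans (mem_fiber.1 (mem_piecesIn.1 hj hr)).2

end Pieces

/-- The norm of the part of `x` in `D`, counted only if `D` cuts `x`. -/
noncomputable def partialNorm (N : c00 → ℝ) (x : c00) (D : Finset ℕ) : ℝ :=
  if x.support ⊆ D then 0 else N (proj D x)

/-- The part of the norm of `proj D (∑ l, u l)` that is not accounted for by the number of pieces
`u l` inside `D`: a potential for the losses due to cutting pieces, now or later. -/
noncomputable def cutError {ι : Type*} [Fintype ι] (N : c00 → ℝ) (ν : ℕ) (u : ι → c00)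
    (D : Finset ℕ) : ℝ :=
  2 / Fintype.card ι * cutBound ν #(piecesIn u D) + ∑ l, partialNorm N (u l) D

theorem partialNorm_eq_zero {N : c00 → ℝ} {x : c00} {D : Finset ℕ} (h : x.support ⊆ D) :
    partialNorm N x D = 0 :=
  if_pos h

theorem cutError_le_of_forall_subset {ι : Type*} [Fintype ι] [Nonempty ι] {N : c00 → ℝ}
    {u : ι → c00} {ν : ℕ} (hν : 1 ≤ ν) {D : Finset ℕ} (hD : ∀ l, (u l).support ⊆ D) (d : ℕ) :
    cutError N ν u D ≤ 2 * (flog 2)⁻¹ ^ d + 2 * (2 * ν) ^ d / Fintype.card ι := by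
  have hall : piecesIn u D = univ := filter_true_of_mem fun l _ => hD l
  have hk : (Fintype.card ι : ℝ) ≠ 0 := Nat.cast_ne_zero.2 Fintype.card_ne_zero
  rw [cutError, hall, card_univ, sum_eq_zero fun l _ => partialNorm_eq_zero (hD l), add_zero]
  calc 2 / (Fintype.card ι : ℝ) * cutBound ν (Fintype.card ι)
      ≤ 2 / Fintype.card ι * ((flog 2)⁻¹ ^ d * Fintype.card ι + (2 * ν) ^ d) := by
        gcongr
        linarith [cutBound_le hν (Nat.cast_nonneg (Fintype.card ι)) d]
    _ = 2 * (flog 2)⁻¹ ^ d + 2 * (2 * ν) ^ d / Fintype.card ι := by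
        rw [mul_add, div_mul_eq_mul_div, mul_div_assoc, mul_div_cancel_right₀ _ hk,
          div_mul_eq_mul_div]

namespace IsSchlumprechtNorm

variable {N : c00 → ℝ} (hN : IsSchlumprechtNorm N)
include hN

theorem partialNorm_nonneg (x : c00) (D : Finset ℕ) : 0 ≤ partialNorm N x D := by
  rw [partialNorm]
  split_ifs
  exacts [le_rfl, hN.map_nonneg _]

theorem partialNorm_le (x : c00) (D : Finset ℕ) : partialNorm N x D ≤ N (proj D x) := by
  rw [partialNorm]
  split_ifs
  exacts [hN.map_nonneg _, le_rfl]

theorem partialNorm_fiber_eq_zero {x : c00} {n : ℕ} {g : ℕ → Fin n} {D : Finset ℕ} {j : Fin n}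
    (h : x.support ⊆ fiber g D j) (i : Fin n) : partialNorm N x (fiber g D i) = 0 := by
  rcases eq_or_ne i j with rfl | hij
  · exact partialNorm_eq_zero h
  · refine le_antisymm ((hN.partialNorm_le _ _).trans_eq ?_) (hN.partialNorm_nonneg _ _)
    rw [proj_eq_zero, hN.map_zero]
    exact Finset.disjoint_left.2 fun t ht hti =>
      hij ((mem_fiber.1 hti).2.symm.trans (mem_fiber.1 (h ht)).2)

section Pieces

variable {ι : Type*} [Fintype ι] {u : ι → c00} {ν : ℕ}

theorem cutError_nonneg (hν : 1 ≤ ν) (D : Finset ℕ) : 0 ≤ cutError N ν u D :=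
  add_nonneg (mul_nonneg (by positivity) (cutBound_nonneg hν (Nat.cast_nonneg _)))
    (sum_nonneg fun _ _ => hN.partialNorm_nonneg _ _)

theorem map_proj_sum_le_add_cutError (hν : 1 ≤ ν) (hu : ∀ l, N (u l) ≤ 2 / Fintype.card ι)
    (D : Finset ℕ) :
    N (proj D (∑ l, u l)) ≤ 2 * (#(piecesIn u D) / Fintype.card ι) + cutError N ν u D := by
  classical
  have hpiece (l : ι) : N (proj D (u l)) ≤
      (if l ∈ piecesIn u D then (2 / Fintype.card ι : ℝ) else 0) + partialNorm N (u l) D := by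
    simp only [mem_piecesIn, partialNorm]
    split_ifs
    · simpa using (hN.map_proj_le D (u l)).trans (hu l)
    · simp
  have hbound : 0 ≤ 2 / Fintype.card ι * cutBound ν #(piecesIn u D) :=
    mul_nonneg (by positivity) (cutBound_nonneg hν (Nat.cast_nonneg _))
  calc N (proj D (∑ l, u l)) ≤ ∑ l, N (proj D (u l)) := by
        rw [proj_sum]
        exact hN.map_sum_le _ _
    _ ≤ _ := sum_le_sum fun l _ => hpiece l
    _ = 2 * (#(piecesIn u D) / Fintype.card ι) + ∑ l, partialNorm N (u l) D := by
        rw [sum_add_distrib, sum_ite_mem, univ_inter, sum_const, nsmul_eq_mul]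
        ring
    _ ≤ _ := by
        rw [cutError]
        linarith

theorem sum_partialNorm_fiber_le (hu : ∀ l, N (u l) ≤ 2 / Fintype.card ι) {n : ℕ} (hn : 1 ≤ n)
    {g : ℕ → Fin n} (hg : Monotone g) (D : Finset ℕ) (l : ι) [Decidable (l ∈ cutPieces u g D)] :
    ∑ j, partialNorm N (u l) (fiber g D j) ≤ flog n *
      (partialNorm N (u l) D + if l ∈ cutPieces u g D then (2 / Fintype.card ι : ℝ) else 0) := by
  have hF := (flog_natCast_pos hn).le
  have hsum : ∑ j, partialNorm N (u l) (fiber g D j) ≤ flog n * N (proj D (u l)) :=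
    (sum_le_sum fun j _ => hN.partialNorm_le _ _).trans (hN.sum_map_proj_fiber_le hn hg D (u l))
  by_cases hD : (u l).support ⊆ D
  · rw [partialNorm_eq_zero hD, zero_add]
    split_ifs with hcut
    · refine hsum.trans (mul_le_mul_of_nonneg_left ?_ hF)
      exact (hN.map_proj_le D (u l)).trans (hu l)
    · obtain ⟨j, hj⟩ : ∃ j, (u l).support ⊆ fiber g D j := by
        by_contra h
        exact hcut (mem_filter.2 ⟨mem_piecesIn.2 hD, h⟩)
      simp [hN.partialNorm_fiber_eq_zero hj]
  · rw [partialNorm, if_neg hD]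
    refine hsum.trans (mul_le_mul_of_nonneg_left (le_add_of_nonneg_right ?_) hF)
    split_ifs <;> positivity

theorem sum_cutError_fiber_le [LinearOrder ι] (hu0 : ∀ l, u l ≠ 0)
    (hu : ∀ l, N (u l) ≤ 2 / Fintype.card ι) (hsucc : Successive fun l => (u l).support)
    {n : ℕ} (hn : 2 ≤ n) (hnν : n ≤ ν) {g : ℕ → Fin n} (hg : Monotone g) (D : Finset ℕ) :
    ∑ j, cutError N ν u (fiber g D j) ≤ flog n * cutError N ν u D := by
  have hbound : ∑ j, cutBound ν #(piecesIn u (fiber g D j)) + flog n * #(cutPieces u g D) ≤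
      flog n * cutBound ν #(piecesIn u D) :=
    sum_cutBound_add_le hn hnν (fun _ => Nat.cast_nonneg _) (Nat.cast_nonneg _)
      (by exact_mod_cast card_cutPieces_le hu0 hsucc hg D)
      (by exact_mod_cast sum_card_piecesIn_add_card_cutPieces hu0 g D)
  have hpartial : ∑ j, ∑ l, partialNorm N (u l) (fiber g D j) ≤ flog n *
      (∑ l, partialNorm N (u l) D + #(cutPieces u g D) * (2 / Fintype.card ι)) := by
    rw [sum_comm]
    refine (sum_le_sum fun l _ =>
      hN.sum_partialNorm_fiber_le hu (one_le_two.trans hn) hg D l).trans_eq ?_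
    rw [← mul_sum, sum_add_distrib, sum_ite_mem, univ_inter, sum_const, nsmul_eq_mul]
  have hscaled := mul_le_mul_of_nonneg_left hbound (by positivity : 0 ≤ 2 / (Fintype.card ι : ℝ))
  simp only [cutError, sum_add_distrib, ← mul_sum]
  linarith

end Pieces

end IsSchlumprechtNorm

/-! ### Linear combinations of block sequences -/

theorem sum_eq_sum_filter_lt_add_add {M : Type*} [AddCommMonoid M] (a : c00) {h : ℕ → ℝ → M}
    (h0 : ∀ i, h i 0 = 0) (i : ℕ) :
    a.sum h = (a.filter (· < i)).sum h + h i (a i) + (a.filter (i < ·)).sum h := by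
  have hfilter (p : ℕ → Prop) [DecidablePred p] :
      (a.filter p).sum h = ∑ j ∈ a.support, if p j then h j (a j) else 0 := by
    rw [← sum_filter, ← Finsupp.support_filter]
    exact sum_congr rfl fun j hj => by
      rw [Finsupp.filter_apply_pos _ _ (mem_filter.1 hj).2]
  have hi : h i (a i) = ∑ j ∈ a.support, if i = j then h j (a j) else 0 := by
    rw [sum_ite_eq]
    split_ifs with hi
    · rfl
    · rw [Finsupp.notMem_support_iff.1 hi, h0]
  rw [hfilter, hfilter, hi, ← sum_add_distrib, ← sum_add_distrib]
  refine sum_congr rfl fun j _ => ?_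
  rcases lt_trichotomy j i with hj | rfl | hj
  · simp [hj, hj.ne', hj.not_gt]
  · simp
  · simp [hj, hj.ne, hj.not_gt]

theorem Successive.proj_support_linearCombination {y : ℕ → c00}
    (hy : Successive fun i => (y i).support) (a : c00) (i : ℕ) :
    proj (y i).support (Finsupp.linearCombination ℝ y a) = a i • y i := by
  rw [Finsupp.linearCombination_apply, Finsupp.sum, proj_sum, sum_eq_single i]
  · rw [proj_smul, proj_eq_self subset_rfl]
  · intro j _ hji
    rw [proj_smul, proj_eq_zero (hy.disjoint hji), smul_zero]
  · intro hi
    rw [Finsupp.notMem_support_iff.1 hi, zero_smul, proj_eq_zero (by simp)]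

namespace IsSchlumprechtNorm

variable {N : c00 → ℝ} (hN : IsSchlumprechtNorm N)
include hN

theorem map_proj_linearCombination_le (D : Finset ℕ) (y : ℕ → c00) (a : c00) :
    N (proj D (Finsupp.linearCombination ℝ y a)) ≤ a.sum fun i t => |t| * N (proj D (y i)) := by
  rw [Finsupp.linearCombination_apply, Finsupp.sum, proj_sum]
  refine (hN.map_sum_le _ _).trans_eq (sum_congr rfl fun i _ => ?_)
  rw [proj_smul, hN.map_smul]

theorem map_proj_le_map_proj_linearCombination {y : ℕ → c00}
    (hy : Successive fun i => (y i).support) (hy1 : ∀ i, N (y i) = 1) (a : c00) (D : Finset ℕ) :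
    N (proj D a) ≤
      N (proj (D.biUnion fun i => (y i).support) (Finsupp.linearCombination ℝ y a)) := by
  induction D using Finset.strongInduction with | _ D ih
  refine hN.map_proj_le_of_forall_ssubset (hN.map_nonneg _) (fun i hi => ?_)
    fun n hn E hE hED => ?_
  · calc |a i| = N (proj (y i).support (Finsupp.linearCombination ℝ y a)) := by
          rw [hy.proj_support_linearCombination, hN.map_smul, hy1, mul_one]
      _ ≤ _ := hN.map_proj_mono (subset_biUnion_of_mem (fun i => (y i).support) hi) _
  · have hsucc : Successive fun p => (E p).biUnion fun i => (y i).support :=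
      fun p q hpq => hy.fLt_biUnion (hE hpq)
    refine (sum_le_sum fun p _ => ?_).trans (hN.sum_map_proj_le_of_two_le _ hn hsucc)
    rw [proj_proj_of_subset (biUnion_subset_biUnion_of_subset_left _ (hED p).1)]
    exact ih _ (hED p)

theorem le_map_linearCombination {y : ℕ → c00} (hy : Successive fun i => (y i).support)
    (hy1 : ∀ i, N (y i) = 1) (a : c00) : N a ≤ N (Finsupp.linearCombination ℝ y a) := by
  have h := hN.map_proj_le_map_proj_linearCombination hy hy1 a a.support
  rw [proj_eq_self subset_rfl] at h
  exact h.trans (hN.map_proj_le _ _)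

end IsSchlumprechtNorm

/-! ### Rapidly increasing averages -/

/-- Families `u i` of `k i` pieces, on which the averages `average u i` are built. The growth
conditions make every average behave like a multiple of a unit vector under division into at most
`ν i` intervals, and like a negligible vector under division into at least `ν (i + 1)`. -/
structure IsRapidlyIncreasing (N : c00 → ℝ) (ν k : ℕ → ℕ) (u : ∀ i, Fin (k i) → c00) :
    Prop where
  ne_zero : ∀ i l, u i l ≠ 0
  successive : ∀ i, Successive fun l => (u i l).support
  fLt_of_lt : ∀ ⦃i i'⦄, i < i' → ∀ l l', FLt (u i l).support (u i' l').support
  map_le : ∀ i l, N (u i l) ≤ 2 / k i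
  one_le : ∀ i, 1 ≤ ν i
  monotone : Monotone ν
  inv_flog_le : ∀ i, (flog (ν i))⁻¹ ≤ (1 / 2) ^ (i + 2)
  cutError_le : ∀ i D, (∀ l, (u i l).support ⊆ D) → cutError N (ν i) (u i) D ≤ 2 * (1 / 2) ^ i
  sum_abs_le : ∀ i, (flog (ν (i + 1)))⁻¹ * ∑ t ∈ (∑ l, u i l).support, |(∑ l, u i l) t| ≤
    (1 / 2) ^ i

section Averages

variable {k : ℕ → ℕ} (u : ∀ i, Fin (k i) → c00)

/-- The `i`-th average: the sum of all its pieces. -/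
noncomputable def average (i : ℕ) : c00 := ∑ l, u i l

/-- The proportion of the pieces of the `i`-th average that are supported inside `D`. -/
noncomputable def mass (D : Finset ℕ) (i : ℕ) : ℝ := #(piecesIn (u i) D) / k i

/-- The part of the norm of the `i`-th average on `D` that its mass does not account for: losses
by cutting pieces if the division is coarse, and the whole of the average if it is fine. -/
noncomputable def averageError (N : c00 → ℝ) (ν : ℕ → ℕ) (D : Finset ℕ) (i : ℕ) : ℝ :=
  cutError N (ν i) (u i) D + (flog (ν (i + 1)))⁻¹ * ∑ t ∈ D, |average u i t|

/-- The masses of the averages `a i • average u i` on `D`, as a vector. -/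
noncomputable def massVec (D : Finset ℕ) (a : c00) : c00 :=
  Finsupp.onFinset a.support (fun i => |a i| * mass u D i) fun i hi =>
    Finsupp.mem_support_iff.2 fun h => hi (by rw [h, abs_zero, zero_mul])

/-- The sum of the errors of the averages `a i • average u i` on `D`. -/
noncomputable def totalError (N : c00 → ℝ) (ν : ℕ → ℕ) (D : Finset ℕ) (a : c00) : ℝ :=
  a.sum fun i t => |t| * averageError u N ν D i

/-- The bound for the norm of `∑ i, a i • average u i` on `D`, provided that `a` is supported in
`[m, ∞)`. The factor improves with `m`, which gives room for the losses of an induction on `D`. -/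
noncomputable def combinationBound (N : c00 → ℝ) (ν : ℕ → ℕ) (m : ℕ) (D : Finset ℕ) (a : c00) :
    ℝ :=
  2 * (1 + (1 / 2) ^ m) * pairNorm N (massVec u D a) + totalError u N ν D a

variable {u}

theorem massVec_apply (D : Finset ℕ) (a : c00) (i : ℕ) :
    massVec u D a i = |a i| * mass u D i :=
  rfl

theorem mass_nonneg (D : Finset ℕ) (i : ℕ) : 0 ≤ mass u D i := by
  rw [mass]
  positivity

theorem mass_le_one (D : Finset ℕ) (i : ℕ) : mass u D i ≤ 1 :=
  div_le_one_of_le₀ (by simpa using card_piecesIn_le (u := u i) D) (Nat.cast_nonneg _)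

theorem massVec_nonneg (D : Finset ℕ) (a : c00) (i : ℕ) : 0 ≤ massVec u D a i :=
  mul_nonneg (abs_nonneg _) (mass_nonneg D i)

theorem abs_massVec_le (D : Finset ℕ) (a : c00) (i : ℕ) : |massVec u D a i| ≤ |a i| := by
  rw [abs_of_nonneg (massVec_nonneg D a i)]
  exact mul_le_of_le_one_right (abs_nonneg _) (mass_le_one D i)

theorem massVec_filter (D : Finset ℕ) (a : c00) (p : ℕ → Prop) [DecidablePred p] :
    massVec u D (a.filter p) = (massVec u D a).filter p := by
  ext i
  simp only [massVec_apply, Finsupp.filter_apply]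
  split_ifs <;> simp

theorem exists_support_subset_of_mem_support_massVec {D : Finset ℕ} {a : c00} {i : ℕ}
    (hi : i ∈ (massVec u D a).support) : ∃ l, (u i l).support ⊆ D := by
  by_contra! h
  refine Finsupp.mem_support_iff.1 hi ?_
  rw [massVec_apply, mass, piecesIn, filter_false_of_mem fun l _ => h l]
  simp

theorem support_average_subset (i : ℕ) :
    (average u i).support ⊆ univ.biUnion fun l => (u i l).support :=
  Finsupp.support_finsetSum

theorem IsSchlumprechtNorm.two_mul_mass_add_map_massVec_filter_le {N : c00 → ℝ}
    (hN : IsSchlumprechtNorm N) (D : Finset ℕ) (m i : ℕ) (a : c00) :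
    2 * (|a i| * mass u D i) + 2 * (1 + (1 / 2) ^ m) * N (massVec u D (a.filter (i < ·))) ≤
      2 * (1 + (1 / 2) ^ m) * pairNorm N (massVec u D a) := by
  have hpair : massVec u D a i + N (massVec u D (a.filter (i < ·))) ≤
      pairNorm N (massVec u D a) := by
    have h := hN.abs_apply_add_map_filter_lt_le_pairNorm (massVec u D a) i
    rwa [abs_of_nonneg (massVec_nonneg D a i), ← massVec_filter] at h
  have hfactor : (2 : ℝ) ≤ 2 * (1 + (1 / 2) ^ m) :=
    le_mul_of_one_le_right zero_le_two (le_add_of_nonneg_right (by positivity))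
  calc _ ≤ 2 * (1 + (1 / 2) ^ m) * massVec u D a i +
        2 * (1 + (1 / 2) ^ m) * N (massVec u D (a.filter (i < ·))) :=
        add_le_add_left (mul_le_mul_of_nonneg_right hfactor (massVec_nonneg D a i)) _
    _ ≤ _ := by
        rw [← mul_add]
        gcongr

namespace IsRapidlyIncreasing

variable {N : c00 → ℝ} {ν : ℕ → ℕ} (hu : IsRapidlyIncreasing N ν k u)
include hu

theorem successive_average : Successive fun i => (average u i).support := by
  intro i j hij s hs t ht
  obtain ⟨l, -, hs⟩ := mem_biUnion.1 (support_average_subset i hs)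
  obtain ⟨l', -, ht⟩ := mem_biUnion.1 (support_average_subset j ht)
  exact hu.fLt_of_lt hij l l' s hs t ht

theorem flog_pos (i : ℕ) : 0 < flog (ν i) :=
  flog_natCast_pos (hu.one_le i)

theorem isFractionalSplitting_massVec {n : ℕ} {g : ℕ → Fin n} (hg : Monotone g) (D : Finset ℕ)
    (a : c00) :
    IsFractionalSplitting (fun j => massVec u (fiber g D j) a) (massVec u D a) where
  nonneg j := massVec_nonneg _ a
  le_of_lt p q hpq i hi i' hi' := by
    obtain ⟨l, hl⟩ := exists_support_subset_of_mem_support_massVec hi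
    obtain ⟨l', hl'⟩ := exists_support_subset_of_mem_support_massVec hi'
    obtain ⟨t, ht⟩ := Finsupp.support_nonempty_iff.2 (hu.ne_zero i l)
    obtain ⟨t', ht'⟩ := Finsupp.support_nonempty_iff.2 (hu.ne_zero i' l')
    exact not_lt.1 fun hlt => (hu.fLt_of_lt hlt l' l t' ht' t ht).asymm
      (successive_fiber hg D hpq t (hl ht) t' (hl' ht'))
  sum_le i := by
    have h : (∑ j, #(piecesIn (u i) (fiber g D j)) : ℝ) ≤ #(piecesIn (u i) D) := by
      exact_mod_cast Nat.le.intro (sum_card_piecesIn_add_card_cutPieces (hu.ne_zero i) g D)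
    simp only [massVec_apply, mass, ← mul_sum, ← sum_div]
    gcongr

theorem averageError_nonneg (hN : IsSchlumprechtNorm N) (D : Finset ℕ) (i : ℕ) :
    0 ≤ averageError u N ν D i :=
  add_nonneg (hN.cutError_nonneg (hu.one_le i) D)
    (mul_nonneg (inv_nonneg.2 (hu.flog_pos _).le) (sum_nonneg fun _ _ => abs_nonneg _))

theorem totalError_nonneg (hN : IsSchlumprechtNorm N) (D : Finset ℕ) (a : c00) :
    0 ≤ totalError u N ν D a :=
  sum_nonneg fun i _ => mul_nonneg (abs_nonneg _) (hu.averageError_nonneg hN D i)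

theorem averageError_le {D : Finset ℕ} {i : ℕ} (hD : ∀ l, (u i l).support ⊆ D) :
    averageError u N ν D i ≤ 3 * (1 / 2) ^ i := by
  have hsum : (flog (ν (i + 1)))⁻¹ * ∑ t ∈ D, |average u i t| ≤ (1 / 2) ^ i :=
    (mul_le_mul_of_nonneg_left (sum_abs_le_sum_support_abs _ D)
      (inv_nonneg.2 (hu.flog_pos _).le)).trans (hu.sum_abs_le i)
  rw [averageError]
  linarith [hu.cutError_le i D hD]

theorem map_proj_average_le (hN : IsSchlumprechtNorm N) (D : Finset ℕ) (i : ℕ) :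
    N (proj D (average u i)) ≤ 2 * mass u D i + averageError u N ν D i := by
  have h := hN.map_proj_sum_le_add_cutError (hu.one_le i)
    (u := u i) (by simpa using hu.map_le i) D
  rw [Fintype.card_fin] at h
  refine h.trans (add_le_add_right (le_add_of_nonneg_right ?_) _)
  exact mul_nonneg (inv_nonneg.2 (hu.flog_pos _).le) (sum_nonneg fun _ _ => abs_nonneg _)

theorem sum_averageError_fiber_le (hN : IsSchlumprechtNorm N) {n i : ℕ} (hn : 2 ≤ n)
    (hni : n ≤ ν i) {g : ℕ → Fin n} (hg : Monotone g) (D : Finset ℕ) :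
    ∑ j, averageError u N ν (fiber g D j) i ≤ flog n * averageError u N ν D i := by
  have hcut := hN.sum_cutError_fiber_le (hu.ne_zero i) (by simpa using hu.map_le i)
    (hu.successive i) hn hni hg D
  simp only [averageError, sum_add_distrib, ← mul_sum, sum_sum_fiber, mul_add]
  refine add_le_add hcut (le_mul_of_one_le_left ?_ ?_)
  · exact mul_nonneg (inv_nonneg.2 (hu.flog_pos _).le) (sum_nonneg fun _ _ => abs_nonneg _)
  · exact one_le_flog (by exact_mod_cast one_le_two.trans hn)

theorem sum_map_proj_average_fiber_le (hN : IsSchlumprechtNorm N) {n i : ℕ}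
    (hni : ν (i + 1) ≤ n) (g : ℕ → Fin n) (D : Finset ℕ) :
    ∑ j, N (proj (fiber g D j) (average u i)) ≤ flog n * averageError u N ν D i := by
  have hF : flog (ν (i + 1)) ≤ flog n := flog_le_flog (Nat.cast_nonneg _) (by exact_mod_cast hni)
  calc ∑ j, N (proj (fiber g D j) (average u i))
      ≤ ∑ j, ∑ t ∈ fiber g D j, |average u i t| :=
        sum_le_sum fun j _ => hN.map_proj_le_sum_abs _ _
    _ = flog (ν (i + 1)) * ((flog (ν (i + 1)))⁻¹ * ∑ t ∈ D, |average u i t|) := by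
        rw [sum_sum_fiber, mul_inv_cancel_left₀ (hu.flog_pos _).ne']
    _ ≤ flog n * averageError u N ν D i := by
        refine mul_le_mul hF (le_add_of_nonneg_left (hN.cutError_nonneg (hu.one_le i) D)) ?_
          ((hu.flog_pos _).le.trans hF)
        exact mul_nonneg (inv_nonneg.2 (hu.flog_pos _).le) (sum_nonneg fun _ _ => abs_nonneg _)

theorem sum_totalError_fiber_le (hN : IsSchlumprechtNorm N) {n : ℕ} (hn : 2 ≤ n)
    {g : ℕ → Fin n} (hg : Monotone g) (D : Finset ℕ) {a : c00}
    (ha : ∀ i ∈ a.support, n ≤ ν i) :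
    ∑ j, totalError u N ν (fiber g D j) a ≤ flog n * totalError u N ν D a := by
  simp only [totalError, Finsupp.sum]
  rw [sum_comm, mul_sum]
  refine sum_le_sum fun i hi => ?_
  rw [← mul_sum, mul_left_comm]
  exact mul_le_mul_of_nonneg_left (hu.sum_averageError_fiber_le hN hn (ha i hi) hg D)
    (abs_nonneg _)

theorem sum_map_proj_fiber_le_of_forall_le (hN : IsSchlumprechtNorm N) {n : ℕ} (g : ℕ → Fin n)
    (D : Finset ℕ) {a : c00} (ha : ∀ i ∈ a.support, ν (i + 1) ≤ n) :
    ∑ j, N (proj (fiber g D j) (Finsupp.linearCombination ℝ (average u) a)) ≤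
      flog n * totalError u N ν D a := by
  refine (sum_le_sum fun j _ => hN.map_proj_linearCombination_le _ _ a).trans ?_
  simp only [totalError, Finsupp.sum]
  rw [sum_comm, mul_sum]
  refine sum_le_sum fun i hi => ?_
  rw [← mul_sum, mul_left_comm]
  exact mul_le_mul_of_nonneg_left (hu.sum_map_proj_average_fiber_le hN (ha i hi) g D)
    (abs_nonneg _)

theorem combinationBound_nonneg (hN : IsSchlumprechtNorm N) (m : ℕ) (D : Finset ℕ) (a : c00) :
    0 ≤ combinationBound u N ν m D a :=
  add_nonneg (mul_nonneg (by positivity) (hN.pairNorm_nonneg _)) (hu.totalError_nonneg hN D a)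

theorem abs_combination_apply_le (hN : IsSchlumprechtNorm N) (m : ℕ) {D : Finset ℕ} {t : ℕ}
    (ht : t ∈ D) (a : c00) :
    |Finsupp.linearCombination ℝ (average u) a t| ≤ combinationBound u N ν m D a := by
  by_cases hty : ∃ i ∈ a.support, t ∈ (average u i).support
  · obtain ⟨i, hi, hti⟩ := hty
    have hmass : |a i| * mass u D i ≤ pairNorm N (massVec u D a) := by
      have h := hN.abs_apply_add_map_filter_lt_le_pairNorm (massVec u D a) i
      rw [abs_of_nonneg (massVec_nonneg D a i)] at h
      exact (le_add_of_nonneg_right (hN.map_nonneg _)).trans h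
    have herror : |a i| * averageError u N ν D i ≤ totalError u N ν D a :=
      single_le_sum (f := fun i => |a i| * averageError u N ν D i)
        (fun i _ => mul_nonneg (abs_nonneg _) (hu.averageError_nonneg hN D i)) hi
    calc |Finsupp.linearCombination ℝ (average u) a t| = |a i| * |proj D (average u i) t| := by
          have h := DFunLike.congr_fun
            (hu.successive_average.proj_support_linearCombination a i) t
          rw [proj_apply, if_pos hti] at h
          rw [h, proj_apply, if_pos ht, Finsupp.smul_apply, smul_eq_mul, abs_mul]
      _ ≤ |a i| * (2 * mass u D i + averageError u N ν D i) := by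
          gcongr
          exact (hN.abs_apply_le _ t).trans (hu.map_proj_average_le hN D i)
      _ = 2 * 1 * (|a i| * mass u D i) + |a i| * averageError u N ν D i := by ring
      _ ≤ combinationBound u N ν m D a := by
          rw [combinationBound]
          gcongr
          · exact mul_nonneg (abs_nonneg _) (mass_nonneg D i)
          · exact le_add_of_nonneg_right (by positivity)
  · rw [Finsupp.linearCombination_apply, Finsupp.sum, Finsupp.finsetSum_apply,
      sum_eq_zero fun i hi => ?_, abs_zero]
    · exact hu.combinationBound_nonneg hN m D a
    · rw [Finsupp.smul_apply, Finsupp.notMem_support_iff.1 fun h => hty ⟨i, hi, h⟩, smul_zero]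

theorem sum_combinationBound_fiber_le (hN : IsSchlumprechtNorm N) {n : ℕ} (hn : 2 ≤ n)
    {g : ℕ → Fin n} (hg : Monotone g) (m : ℕ) (D : Finset ℕ) {a : c00}
    (ha : ∀ i ∈ a.support, n ≤ ν i) :
    ∑ j, combinationBound u N ν m (fiber g D j) a ≤
      2 * (1 + (1 / 2) ^ m) * ∑ j, pairNorm N (massVec u (fiber g D j) a) +
        flog n * totalError u N ν D a := by
  simp only [combinationBound, sum_add_distrib, ← mul_sum]
  exact add_le_add_right (hu.sum_totalError_fiber_le hN hn hg D ha) _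

theorem mul_flog_add_one_le {n m i : ℕ} (hni : ν i ≤ n) (hmi : m ≤ i) :
    2 * (1 + (1 / 2) ^ (i + 1)) * (flog n + 1) ≤ flog n * (2 * (1 + (1 / 2) ^ m)) := by
  have hF : 0 < flog n := flog_natCast_pos ((hu.one_le i).trans hni)
  have hFi : (flog n)⁻¹ ≤ (1 / 2) ^ (i + 2) :=
    (inv_anti₀ (hu.flog_pos i) (flog_le_flog (Nat.cast_nonneg _) (by exact_mod_cast hni))).trans
      (hu.inv_flog_le i)
  have hgain : 1 ≤ flog n * (1 / 2) ^ (i + 2) := (inv_le_iff_one_le_mul₀' hF).1 hFi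
  have hm : flog n * (1 / 2) ^ i ≤ flog n * (1 / 2) ^ m :=
    mul_le_mul_of_nonneg_left (pow_le_pow_of_le_one (by norm_num) (by norm_num) hmi) hF.le
  have hi : ((1 : ℝ) / 2) ^ i ≤ 1 := pow_le_one₀ (by norm_num) (by norm_num)
  rw [pow_add] at hgain ⊢
  linarith

theorem sum_map_proj_fiber_head_le (hN : IsSchlumprechtNorm N) {n : ℕ} (hn : 1 ≤ n)
    {g : ℕ → Fin n} (hg : Monotone g) (D : Finset ℕ) {i : ℕ} (hi : ν i ≤ n) (a : c00) :
    ∑ j, N (proj (fiber g D j)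
        (Finsupp.linearCombination ℝ (average u) (a.filter (· < i)) + a i • average u i)) ≤
      flog n * (totalError u N ν D (a.filter (· < i)) +
        |a i| * (2 * mass u D i + averageError u N ν D i)) := by
  have hhead := hu.sum_map_proj_fiber_le_of_forall_le hN g D (a := a.filter (· < i))
    fun i' hi' => (hu.monotone (mem_filter.1 hi').2).trans hi
  have hsingle : ∑ j, N (proj (fiber g D j) (a i • average u i)) ≤
      flog n * (|a i| * (2 * mass u D i + averageError u N ν D i)) := by
    refine (hN.sum_map_proj_fiber_le hn hg D _).trans ?_
    rw [proj_smul, hN.map_smul]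
    gcongr
    exacts [(flog_natCast_pos hn).le, hu.map_proj_average_le hN D i]
  rw [mul_add]
  refine le_trans ?_ (add_le_add hhead hsingle)
  rw [← sum_add_distrib]
  exact sum_le_sum fun j _ => by
    rw [proj_add]
    exact hN.map_add_le _ _

theorem sum_map_proj_fiber_tail_le (hN : IsSchlumprechtNorm N) {n : ℕ} (hn : 2 ≤ n)
    {g : ℕ → Fin n} (hg : Monotone g) (D : Finset ℕ) {m i : ℕ} (hmi : m ≤ i) (hi : ν i ≤ n)
    {a : c00} (ha : ∀ i' ∈ a.support, n ≤ ν i')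
    (ih : ∀ j, N (proj (fiber g D j) (Finsupp.linearCombination ℝ (average u) a)) ≤
      combinationBound u N ν (i + 1) (fiber g D j) a) :
    ∑ j, N (proj (fiber g D j) (Finsupp.linearCombination ℝ (average u) a)) ≤
      flog n * (2 * (1 + (1 / 2) ^ m) * N (massVec u D a) + totalError u N ν D a) := by
  calc ∑ j, N (proj (fiber g D j) (Finsupp.linearCombination ℝ (average u) a))
      ≤ 2 * (1 + (1 / 2) ^ (i + 1)) * ∑ j, pairNorm N (massVec u (fiber g D j) a) +
          flog n * totalError u N ν D a :=
        (sum_le_sum fun j _ => ih j).trans (hu.sum_combinationBound_fiber_le hN hn hg _ D ha)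
    _ ≤ 2 * (1 + (1 / 2) ^ (i + 1)) * ((flog n + 1) * N (massVec u D a)) +
          flog n * totalError u N ν D a := by
        gcongr
        exact hN.sum_pairNorm_le_mul_norm (one_le_two.trans hn)
          (hu.isFractionalSplitting_massVec hg D a)
    _ ≤ flog n * (2 * (1 + (1 / 2) ^ m)) * N (massVec u D a) +
          flog n * totalError u N ν D a := by
        rw [← mul_assoc]
        gcongr ?_ * _ + _
        · exact hN.map_nonneg _
        · exact hu.mul_flog_add_one_le hi hmi
    _ = _ := by ring

/- The largest index `i` with `ν i < n` is the only one whose average is neither negligible nor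
like a unit vector under division into `n` intervals. The term `|a i| * mass u D i` uses one part
of the pair in `pairNorm`, and the combination of the later averages the other part. -/
theorem sum_map_proj_fiber_combination_le_of_index (hN : IsSchlumprechtNorm N) {n : ℕ}
    (hn : 2 ≤ n) {g : ℕ → Fin n} (hg : Monotone g) (D : Finset ℕ) {m i : ℕ} {a : c00}
    (hmi : m ≤ i) (hi : ν i ≤ n) (htail : ∀ i' ∈ a.support, i < i' → n ≤ ν i')
    (ih : ∀ j, N (proj (fiber g D j)
        (Finsupp.linearCombination ℝ (average u) (a.filter (i < ·)))) ≤
      combinationBound u N ν (i + 1) (fiber g D j) (a.filter (i < ·))) :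
    ∑ j, N (proj (fiber g D j) (Finsupp.linearCombination ℝ (average u) a)) ≤
      flog n * combinationBound u N ν m D a := by
  have hF : 0 ≤ flog n := (flog_natCast_pos (one_le_two.trans hn)).le
  have hcombination : Finsupp.linearCombination ℝ (average u) a =
      Finsupp.linearCombination ℝ (average u) (a.filter (· < i)) + a i • average u i +
        Finsupp.linearCombination ℝ (average u) (a.filter (i < ·)) :=
    sum_eq_sum_filter_lt_add_add a (h := fun i t => t • average u i)
      (fun i => zero_smul ℝ (average u i)) i
  have herror : totalError u N ν D a = totalError u N ν D (a.filter (· < i)) +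
      |a i| * averageError u N ν D i + totalError u N ν D (a.filter (i < ·)) :=
    sum_eq_sum_filter_lt_add_add a (fun _ => by rw [abs_zero, zero_mul]) i
  calc _ ≤ flog n * (totalError u N ν D (a.filter (· < i)) +
          |a i| * (2 * mass u D i + averageError u N ν D i)) +
        flog n * (2 * (1 + (1 / 2) ^ m) * N (massVec u D (a.filter (i < ·))) +
          totalError u N ν D (a.filter (i < ·))) := by
        refine le_trans ?_ (add_le_add
          (hu.sum_map_proj_fiber_head_le hN (one_le_two.trans hn) hg D hi a)
          (hu.sum_map_proj_fiber_tail_le hN hn hg D hmi hi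
            (fun i' hi' => (mem_filter.1 hi').elim (htail i')) ih))
        rw [hcombination, ← sum_add_distrib]
        exact sum_le_sum fun j _ => by
          rw [proj_add]
          exact hN.map_add_le _ _
    _ ≤ flog n * combinationBound u N ν m D a := by
        rw [← mul_add, combinationBound, herror]
        refine mul_le_mul_of_nonneg_left ?_ hF
        linarith [hN.two_mul_mass_add_map_massVec_filter_le (u := u) D m i a]

theorem sum_map_proj_fiber_combination_le (hN : IsSchlumprechtNorm N) {n : ℕ} (hn : 2 ≤ n)
    {g : ℕ → Fin n} (hg : Monotone g) (D : Finset ℕ) {m : ℕ} {a : c00}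
    (ha : ∀ i ∈ a.support, m ≤ i)
    (ih : ∀ j (m : ℕ) (a : c00), (∀ i ∈ a.support, m ≤ i) →
      N (proj (fiber g D j) (Finsupp.linearCombination ℝ (average u) a)) ≤
        combinationBound u N ν m (fiber g D j) a) :
    ∑ j, N (proj (fiber g D j) (Finsupp.linearCombination ℝ (average u) a)) ≤
      flog n * combinationBound u N ν m D a := by
  rcases {i ∈ a.support | ν i < n}.eq_empty_or_nonempty with hempty | hne
  · have hlarge : ∀ i ∈ a.support, n ≤ ν i := fun i hi =>
      not_lt.1 (filter_eq_empty_iff.1 hempty hi)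
    refine (sum_le_sum fun j _ => ih j m a ha).trans
      ((hu.sum_combinationBound_fiber_le hN hn hg m D hlarge).trans ?_)
    rw [combinationBound, mul_add (flog n), mul_left_comm (flog n)]
    gcongr
    exact hN.sum_pairNorm_le_mul_pairNorm (one_le_two.trans hn)
      (hu.isFractionalSplitting_massVec hg D a)
  · obtain ⟨i, hi, hmax⟩ := exists_max_image _ id hne
    obtain ⟨hia, hin⟩ := mem_filter.1 hi
    refine hu.sum_map_proj_fiber_combination_le_of_index hN hn hg D (ha i hia) hin.le
      (fun i' hi' hii' => ?_) fun j => ih j _ _ fun i' hi' => (mem_filter.1 hi').2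
    exact not_lt.1 fun h => hii'.not_ge (hmax i' (mem_filter.2 ⟨hi', h⟩))

theorem map_proj_combination_le (hN : IsSchlumprechtNorm N) (D : Finset ℕ) {m : ℕ} {a : c00}
    (ha : ∀ i ∈ a.support, m ≤ i) :
    N (proj D (Finsupp.linearCombination ℝ (average u) a)) ≤ combinationBound u N ν m D a := by
  induction D using Finset.strongInduction generalizing m a with | _ D ih
  exact hN.map_proj_le_of_forall_fiber (hu.combinationBound_nonneg hN m D a)
    (fun t ht => hu.abs_combination_apply_le hN m ht a) fun n hn g hg hgD =>
    hu.sum_map_proj_fiber_combination_le hN hn hg D ha fun j m a ha => ih _ (hgD j) ha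

theorem map_combination_le (hN : IsSchlumprechtNorm N) (a : c00) :
    N (Finsupp.linearCombination ℝ (average u) a) ≤ 14 * N a := by
  let D : Finset ℕ := (Finsupp.linearCombination ℝ (average u) a).support ∪
    a.support.biUnion fun i => univ.biUnion fun l => (u i l).support
  have hD : ∀ i ∈ a.support, ∀ l, (u i l).support ⊆ D := fun i hi l =>
    (subset_biUnion_of_mem (fun l => (u i l).support) (mem_univ l)).trans
      ((subset_biUnion_of_mem (fun i => univ.biUnion fun l => (u i l).support) hi).trans
        subset_union_right)
  have hmass : pairNorm N (massVec u D a) ≤ 2 * N a :=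
    (hN.pairNorm_le _).trans (mul_le_mul_of_nonneg_left (hN.mono (abs_massVec_le D a)) zero_le_two)
  have herror : totalError u N ν D a ≤ 6 * N a :=
    calc totalError u N ν D a ≤ ∑ i ∈ a.support, N a * (3 * (1 / 2) ^ i) := by
          refine sum_le_sum fun i hi => ?_
          exact mul_le_mul (hN.abs_apply_le a i) (hu.averageError_le (hD i hi))
            (hu.averageError_nonneg hN D i) (hN.map_nonneg a)
      _ = 3 * N a * ∑ i ∈ a.support, (1 / 2) ^ i := by
          rw [mul_sum]
          exact sum_congr rfl fun i _ => by ring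
      _ ≤ 3 * N a * 2 := by
          have := hN.map_nonneg a
          gcongr
          exact (summable_geometric_two.sum_le_tsum _ fun i _ => by positivity).trans_eq
            tsum_geometric_two
      _ = 6 * N a := by ring
  have h := hu.map_proj_combination_le hN D (m := 0) (a := a) fun i _ => i.zero_le
  rw [proj_eq_self subset_union_left, combinationBound, pow_zero] at h
  linarith

end IsRapidlyIncreasing

end Averages

/-! ### Averages of `ℓ₁` type -/

theorem successive_of_fLt_succ {E : ℕ → Finset ℕ} (hne : ∀ n, (E n).Nonempty)
    (h : ∀ n, FLt (E n) (E (n + 1))) : Successive E := by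
  intro m n hmn
  induction n, hmn using Nat.le_induction with
  | base => exact h m
  | succ n _ ih =>
    intro s hs t ht
    obtain ⟨r, hr⟩ := hne n
    exact (ih s hs r hr).trans (h n r hr t ht)

theorem IsBlockSeq.successive {z : ℕ → c00} (hz : IsBlockSeq z) :
    Successive fun n => (z n).support :=
  successive_of_fLt_succ (fun n => Finsupp.support_nonempty_iff.2 (hz.1 n)) hz.2

theorem Successive.proj_support_sum {ι : Type*} [LinearOrder ι] {w : ι → c00}
    (hw : Successive fun i => (w i).support) {s : Finset ι} {i : ι} (hi : i ∈ s) :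
    proj (w i).support (∑ j ∈ s, w j) = w i := by
  rw [proj_sum, sum_eq_single_of_mem i hi fun j _ hji => proj_eq_zero (hw.disjoint hji),
    proj_eq_self subset_rfl]

theorem support_sum_subset_biUnion {ι : Type*} (s : Finset ι) (w : ι → c00) :
    (∑ i ∈ s, w i).support ⊆ s.biUnion fun i => (w i).support := by
  intro t ht
  rw [Finsupp.mem_support_iff, Finsupp.finsetSum_apply] at ht
  obtain ⟨i, hi, hne⟩ := exists_ne_zero_of_sum_ne_zero ht
  exact mem_biUnion.2 ⟨i, hi, Finsupp.mem_support_iff.2 hne⟩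

theorem sum_sum_Ico_add_mul {M : Type*} [AddCommMonoid M] (f : ℕ → M) (m L k : ℕ) :
    ∑ l : Fin k, ∑ i ∈ Ico (m + l * L) (m + l * L + L), f i = ∑ i ∈ Ico m (m + k * L), f i := by
  induction k with
  | zero => simp
  | succ k ih =>
    rw [Fin.sum_univ_castSucc]
    simp only [Fin.val_castSucc, Fin.val_last]
    rw [ih, sum_Ico_consecutive f (by lia) (by lia), add_one_mul, add_assoc]

theorem flog_two_pow_le (m : ℕ) : flog (2 ^ m) ≤ m + 1 := by
  induction m with
  | zero => simp [flog_one]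
  | succ m ih =>
    rw [pow_succ', Nat.cast_add_one]
    exact (flog_two_mul_le (by positivity)).trans (by linarith)

theorem exists_flog_pow_lt_two_pow (k : ℕ) : ∃ p, flog ((k : ℝ) ^ p) < 2 ^ p := by
  have hlim := (tendsto_pow_const_div_const_pow_of_one_lt 1 one_lt_two).eventually
    (gt_mem_nhds (by positivity : (0 : ℝ) < 1 / (k + 1)))
  obtain ⟨p, hp, hp1⟩ := (hlim.and (Filter.eventually_ge_atTop 1)).exists
  rw [pow_one, div_lt_div_iff₀ (by positivity) (by positivity), one_mul] at hp
  have hk : (k : ℝ) ≤ 2 ^ k := by exact_mod_cast Nat.lt_two_pow_self.le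
  have hp1' : (1 : ℝ) ≤ p := by exact_mod_cast hp1
  refine ⟨p, ?_⟩
  calc flog ((k : ℝ) ^ p) ≤ flog (2 ^ (k * p)) :=
        flog_le_flog (by positivity) (pow_mul (2 : ℝ) k p ▸ pow_le_pow_left₀ k.cast_nonneg hk p)
    _ ≤ k * p + 1 := by exact_mod_cast flog_two_pow_le (k * p)
    _ ≤ p * (k + 1) := by linarith
    _ < 2 ^ p := hp

/-- A normalized block sum `∑ l, u l = ∑ i ∈ I, c i • z i` of `(z_n)`, decomposed into pieces
`u l` that span `ℓ₁ᵏ` up to the constant `2`: each piece has norm at most `2 / k`. -/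
structure IsBlockAverage (N : c00 → ℝ) (z : ℕ → c00) (I : Finset ℕ) (c : ℕ → ℝ) {k : ℕ}
    (u : Fin k → c00) : Prop where
  ne_zero : ∀ l, u l ≠ 0
  successive : Successive fun l => (u l).support
  map_le : ∀ l, N (u l) ≤ 2 / k
  map_sum_eq_one : N (∑ l, u l) = 1
  sum_eq : ∑ l, u l = ∑ i ∈ I, c i • z i
  support_subset : ∀ l, (u l).support ⊆ I.biUnion fun i => (z i).support

namespace IsSchlumprechtNorm

variable {N : c00 → ℝ} (hN : IsSchlumprechtNorm N)
include hN

theorem map_inv_smul_self {x : c00} (hx : x ≠ 0) : N ((N x)⁻¹ • x) = 1 := by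
  rw [hN.map_smul, abs_of_pos (inv_pos.2 (hN.map_pos hx)), inv_mul_cancel₀ (hN.map_pos hx).ne']

section NormalizedBlocks

variable {w : ℕ → c00} (hw : Successive fun i => (w i).support) (hw1 : ∀ i, N (w i) = 1)
include hw hw1

theorem card_le_flog_card_mul_map_sum {s : Finset ℕ} (hs : s.Nonempty) :
    #s ≤ flog #s * N (∑ i ∈ s, w i) := by
  refine le_of_eq_of_le ?_ (hN.sum_map_proj_le _ hs hw)
  rw [sum_congr rfl fun i hi => by rw [hw.proj_support_sum hi, hw1], sum_const, nsmul_one]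

theorem map_sum_pos {s : Finset ℕ} (hs : s.Nonempty) : 0 < N (∑ i ∈ s, w i) :=
  pos_of_mul_pos_right
    (lt_of_lt_of_le (by exact_mod_cast hs.card_pos)
      (hN.card_le_flog_card_mul_map_sum hw hw1 hs))
    (flog_natCast_pos hs.card_pos).le

theorem exists_pow_lt_map_sum {k : ℕ} (hk : 1 ≤ k) (m : ℕ) :
    ∃ p, (k / 2 : ℝ) ^ p < N (∑ i ∈ Ico m (m + k ^ p), w i) := by
  obtain ⟨p, hp⟩ := exists_flog_pow_lt_two_pow k
  have hs : (Ico m (m + k ^ p)).Nonempty := nonempty_Ico.2 (Nat.lt_add_of_pos_right (pow_pos hk p))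
  have hcard := hN.card_le_flog_card_mul_map_sum hw hw1 hs
  rw [Nat.card_Ico, Nat.add_sub_cancel_left, Nat.cast_pow] at hcard
  refine ⟨p, ?_⟩
  rw [div_pow, div_lt_iff₀' (by positivity)]
  exact hcard.trans_lt (mul_lt_mul_of_pos_right hp (hN.map_sum_pos hw hw1 hs))

theorem exists_forall_map_sum_le {k : ℕ} (hk : 1 ≤ k) (m : ℕ) :
    ∃ q M, m ≤ M ∧ ∀ M', m ≤ M' →
      N (∑ i ∈ Ico M' (M' + k ^ q), w i) ≤
        2 / k * N (∑ i ∈ Ico M (M + k ^ (q + 1)), w i) := by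
  have hex : ∃ p M, m ≤ M ∧ (k / 2 : ℝ) ^ p < N (∑ i ∈ Ico M (M + k ^ p), w i) :=
    (hN.exists_pow_lt_map_sum hw hw1 hk m).imp fun p hp => ⟨m, le_rfl, hp⟩
  classical
  obtain ⟨M, hM, hlt⟩ := Nat.find_spec hex
  obtain ⟨q, hq⟩ : ∃ q, Nat.find hex = q + 1 := by
    refine Nat.exists_eq_add_one_of_ne_zero fun h0 => ?_
    rw [h0] at hlt
    simp [hw1] at hlt
  have hmin := Nat.find_min hex (m := q) (by lia)
  push Not at hmin
  rw [hq] at hlt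
  refine ⟨q, M, hM, fun M' hM' => (hmin M' hM').trans ?_⟩
  calc (k / 2 : ℝ) ^ q = 2 / k * (k / 2) ^ (q + 1) := by
        rw [pow_succ]
        field_simp
    _ ≤ _ := by gcongr

end NormalizedBlocks

theorem isBlockAverage_inv_smul {z : ℕ → c00} {I : Finset ℕ} {c : ℕ → ℝ} {k : ℕ}
    {v : Fin k → c00} (hv0 : ∀ l, v l ≠ 0) (hv : Successive fun l => (v l).support)
    (hsum0 : ∑ l, v l ≠ 0) (hle : ∀ l, N (v l) ≤ 2 / k * N (∑ l, v l))
    (hsum : ∑ l, v l = ∑ i ∈ I, c i • z i)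
    (hsub : ∀ l, (v l).support ⊆ I.biUnion fun i => (z i).support) :
    IsBlockAverage N z I (fun i => (N (∑ l, v l))⁻¹ * c i)
      (fun l => (N (∑ l, v l))⁻¹ • v l) := by
  have hpos : 0 < N (∑ l, v l) := hN.map_pos hsum0
  refine ⟨fun l => smul_ne_zero (inv_pos.2 hpos).ne' (hv0 l),
    hv.mono fun _ => Finsupp.support_smul, fun l => ?_, ?_, ?_,
    fun l => Finsupp.support_smul.trans (hsub l)⟩
  · rw [hN.map_smul, abs_of_pos (inv_pos.2 hpos), inv_mul_le_iff₀' hpos]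
    exact hle l
  · rw [← smul_sum, hN.map_inv_smul_self hsum0]
  · simp only [← smul_sum, mul_smul]
    rw [← hsum]

theorem exists_isBlockAverage {z : ℕ → c00} (hz : IsBlockSeq z) {k : ℕ} (hk : 1 ≤ k) (m : ℕ) :
    ∃ (I : Finset ℕ) (c : ℕ → ℝ) (u : Fin k → c00),
      (∀ i ∈ I, m ≤ i) ∧ IsBlockAverage N z I c u := by
  let w : ℕ → c00 := fun i => (N (z i))⁻¹ • z i
  have hw : Successive fun i => (w i).support := hz.successive.mono fun _ => Finsupp.support_smul
  have hw1 (i : ℕ) : N (w i) = 1 := hN.map_inv_smul_self (hz.1 i)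
  obtain ⟨q, M, hM, hle⟩ := hN.exists_forall_map_sum_le hw hw1 hk m
  let J (l : ℕ) : Finset ℕ := Ico (M + l * k ^ q) (M + l * k ^ q + k ^ q)
  have hJ : Successive J := fun l l' hll' i hi j hj => by
    have := Nat.mul_le_mul_right (k ^ q) (Nat.succ_le_of_lt hll')
    grind
  have hJI {l : ℕ} (hl : l < k) : J l ⊆ Ico M (M + k ^ (q + 1)) := by
    have := Nat.mul_le_mul_right (k ^ q) (Nat.succ_le_of_lt hl)
    rw [pow_succ']
    exact Ico_subset_Ico (by lia) (by lia)
  have hpos {s : Finset ℕ} (hs : s.Nonempty) : ∑ i ∈ s, w i ≠ 0 := fun h =>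
    (hN.map_sum_pos hw hw1 hs).ne' (by rw [h, hN.map_zero])
  have hsum : ∑ l : Fin k, ∑ i ∈ J l, w i = ∑ i ∈ Ico M (M + k ^ (q + 1)), w i := by
    rw [sum_sum_Ico_add_mul, pow_succ']
  refine ⟨Ico M (M + k ^ (q + 1)), _, _, fun i hi => hM.trans (mem_Ico.1 hi).1,
    hN.isBlockAverage_inv_smul (v := fun l : Fin k => ∑ i ∈ J l, w i)
      (fun l => hpos ?_) (fun l l' hll' => ?_) ?_ (fun l => ?_) hsum fun l => ?_⟩
  · exact nonempty_Ico.2 (Nat.lt_add_of_pos_right (pow_pos hk q))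
  · exact (hw.fLt_biUnion (hJ hll')).mono (support_sum_subset_biUnion _ w)
      (support_sum_subset_biUnion _ w)
  · rw [hsum]
    exact hpos (nonempty_Ico.2 (Nat.lt_add_of_pos_right (pow_pos hk _)))
  · rw [hsum]
    exact hle _ (hM.trans (Nat.le_add_right _ _))
  · exact (support_sum_subset_biUnion _ w).trans
      (biUnion_mono fun _ _ => Finsupp.support_smul) |>.trans
      (biUnion_subset_biUnion_of_subset_left _ (hJI l.2))

end IsSchlumprechtNorm

/-! ### Construction of rapidly increasing averages -/

theorem Successive.exists_glue {I : ℕ → Finset ℕ} (hI : Successive I) {M : Type*} [Zero M]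
    (c : ℕ → ℕ → M) : ∃ c' : ℕ → M, ∀ n, ∀ i ∈ I n, c' i = c n i := by
  classical
  refine ⟨fun i => if h : ∃ n, i ∈ I n then c h.choose i else 0, fun n i hi => ?_⟩
  have h : ∃ n, i ∈ I n := ⟨n, hi⟩
  simp only [dif_pos h, hI.eq_of_mem h.choose_spec hi]

/-- The `i`-th stage of the construction of a rapidly increasing sequence of averages: an average
`∑ l, u l` and a number `ν` of intervals whose cuts it is fine enough to withstand. -/
structure Stage (N : c00 → ℝ) (z : ℕ → c00) (i : ℕ) where
  ν : ℕ
  k : ℕ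
  u : Fin k → c00
  I : Finset ℕ
  c : ℕ → ℝ
  one_le : 1 ≤ ν
  inv_flog_le : (flog ν)⁻¹ ≤ (1 / 2) ^ (i + 2)
  isBlockAverage : IsBlockAverage N z I c u
  cutError_le : ∀ D, (∀ l, (u l).support ⊆ D) → cutError N ν u D ≤ 2 * (1 / 2) ^ i

/-- The stage `t` may come immediately after `s`: its average lies further to the right, and that
of `s` is negligible on divisions into `t.ν` intervals. -/
structure Stage.Precedes {N : c00 → ℝ} {z : ℕ → c00} {i : ℕ} (s : Stage N z i)
    (t : Stage N z (i + 1)) : Prop where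
  fLt : FLt s.I t.I
  ν_le : s.ν ≤ t.ν
  sum_abs_le : (flog t.ν)⁻¹ * ∑ j ∈ (∑ l, s.u l).support, |(∑ l, s.u l) j| ≤ (1 / 2) ^ i

theorem tendsto_inv_flog_atTop :
    Filter.Tendsto (fun n : ℕ => (flog n)⁻¹) Filter.atTop (nhds 0) :=
  ((Real.tendsto_logb_atTop one_lt_two).comp
    (Filter.tendsto_atTop_add_const_right _ 1 tendsto_natCast_atTop_atTop)).inv_tendsto_atTop

theorem exists_forall_cutError_le (N : c00 → ℝ) {ν : ℕ} (hν : 1 ≤ ν) {ε : ℝ} (hε : 0 < ε) :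
    ∃ k : ℕ, 1 ≤ k ∧ ∀ u : Fin k → c00, ∀ D, (∀ l, (u l).support ⊆ D) →
      cutError N ν u D ≤ ε := by
  obtain ⟨d, hd⟩ := exists_pow_lt_of_lt_one (by positivity : 0 < ε / 4)
    (inv_lt_one_of_one_lt₀ one_lt_flog_two)
  obtain ⟨k, hk⟩ := exists_nat_ge (2 * (2 * ν) ^ d / (ε / 2))
  refine ⟨k + 1, k.succ_pos, fun u D hD => (cutError_le_of_forall_subset hν hD d).trans ?_⟩
  have hcut : 2 * (2 * ν : ℝ) ^ d / (k + 1 : ℕ) ≤ ε / 2 := by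
    rw [div_le_comm₀ (by positivity) (by positivity), Nat.cast_add_one]
    linarith
  rw [Fintype.card_fin]
  linarith

namespace IsSchlumprechtNorm

variable {N : c00 → ℝ} (hN : IsSchlumprechtNorm N) {z : ℕ → c00} (hz : IsBlockSeq z)
include hN hz

theorem exists_stage (i m ν : ℕ) (hν : 1 ≤ ν) (hν' : (flog ν)⁻¹ ≤ (1 / 2) ^ (i + 2)) :
    ∃ s : Stage N z i, s.ν = ν ∧ ∀ j ∈ s.I, m ≤ j := by
  obtain ⟨k, hk, hcut⟩ := exists_forall_cutError_le N hν (by positivity : 0 < 2 * (1 / 2 : ℝ) ^ i)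
  obtain ⟨I, c, u, hI, hu⟩ := hN.exists_isBlockAverage hz hk m
  exact ⟨⟨ν, k, u, I, c, hν, hν', hu, hcut u⟩, rfl, hI⟩

theorem exists_precedes {i : ℕ} (s : Stage N z i) : ∃ t : Stage N z (i + 1), s.Precedes t := by
  have hsum := tendsto_inv_flog_atTop.mul_const (∑ j ∈ (∑ l, s.u l).support, |(∑ l, s.u l) j|)
  rw [zero_mul] at hsum
  obtain ⟨ν, ⟨hflog, hsν⟩, hsumν⟩ :=
    ((tendsto_inv_flog_atTop.eventually_le_const (by positivity : 0 < (1 / 2 : ℝ) ^ (i + 3))).and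
      (Filter.eventually_ge_atTop s.ν) |>.and
      (hsum.eventually_le_const (by positivity : 0 < (1 / 2 : ℝ) ^ i))).exists
  obtain ⟨t, rfl, ht⟩ :=
    hN.exists_stage hz (i + 1) (s.I.sup id + 1) ν (s.one_le.trans hsν) hflog
  exact ⟨t, fun a ha b hb => (Nat.lt_succ_of_le (le_sup (f := id) ha)).trans_le (ht b hb),
    hsν, hsumν⟩

theorem exists_forall_precedes :
    ∃ s : ∀ i, Stage N z i, ∀ i, (s i).Precedes (s (i + 1)) := by
  obtain ⟨ν, hflog, hν⟩ := (tendsto_inv_flog_atTop.eventually_le_const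
    (by positivity : 0 < (1 / 2 : ℝ) ^ 2) |>.and (Filter.eventually_ge_atTop 1)).exists
  obtain ⟨s₀, -, -⟩ := hN.exists_stage hz 0 0 ν hν hflog
  choose next hnext using fun i => hN.exists_precedes hz (i := i)
  exact ⟨fun i => Nat.rec s₀ next i, fun i => hnext i _⟩

end IsSchlumprechtNorm

theorem Stage.successive {N : c00 → ℝ} (hN : IsSchlumprechtNorm N) {z : ℕ → c00}
    {s : ∀ i, Stage N z i} (hs : ∀ i, (s i).Precedes (s (i + 1))) :
    Successive fun i => (s i).I := by
  refine successive_of_fLt_succ (fun i => nonempty_iff_ne_empty.2 fun hI => ?_) fun i => (hs i).fLt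
  have h1 := (s i).isBlockAverage.map_sum_eq_one
  rw [(s i).isBlockAverage.sum_eq, hI, sum_empty, hN.map_zero] at h1
  exact zero_ne_one h1

theorem Stage.isRapidlyIncreasing {N : c00 → ℝ} (hN : IsSchlumprechtNorm N) {z : ℕ → c00}
    (hz : IsBlockSeq z) {s : ∀ i, Stage N z i} (hs : ∀ i, (s i).Precedes (s (i + 1))) :
    IsRapidlyIncreasing N (fun i => (s i).ν) (fun i => (s i).k) fun i => (s i).u where
  ne_zero i := (s i).isBlockAverage.ne_zero
  successive i := (s i).isBlockAverage.successive
  fLt_of_lt i i' hii' l l' := (hz.successive.fLt_biUnion (successive hN hs hii')).mono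
    ((s i).isBlockAverage.support_subset l) ((s i').isBlockAverage.support_subset l')
  map_le i := (s i).isBlockAverage.map_le
  one_le i := (s i).one_le
  monotone := monotone_nat_of_le_succ fun i => (hs i).ν_le
  inv_flog_le i := (s i).inv_flog_le
  cutError_le i := (s i).cutError_le
  sum_abs_le i := (hs i).sum_abs_le

theorem exists_isRapidlyIncreasing {N : c00 → ℝ} (hN : IsSchlumprechtNorm N) {z : ℕ → c00}
    (hz : IsBlockSeq z) :
    ∃ (ν k : ℕ → ℕ) (u : ∀ i, Fin (k i) → c00) (I : ℕ → Finset ℕ) (c : ℕ → ℝ),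
      IsRapidlyIncreasing N ν k u ∧ Successive I ∧
      (∀ n, average u n = ∑ i ∈ I n, c i • z i) ∧ ∀ n, N (average u n) = 1 := by
  obtain ⟨s, hs⟩ := hN.exists_forall_precedes hz
  have hI := Stage.successive hN hs
  obtain ⟨c, hc⟩ := hI.exists_glue fun n => (s n).c
  refine ⟨_, _, _, _, c, Stage.isRapidlyIncreasing hN hz hs, hI, fun n => ?_,
    fun n => (s n).isBlockAverage.map_sum_eq_one⟩
  rw [average, (s n).isBlockAverage.sum_eq]
  exact sum_congr rfl fun i hi => by rw [hc n i hi]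

end

/-- every block sequence `(z_n)` of `(e_i)` admits a normalized
block sequence `(y_n)` of `(z_n)` which is equivalent to the unit vector basis. -/
theorem further_block_equivalent_to_basis
    (N : c00 → ℝ) (hN : IsSchlumprechtNorm N)
    (z : ℕ → c00) (hz : IsBlockSeq z) :
    ∃ (I : ℕ → Finset ℕ) (c : ℕ → ℝ) (y : ℕ → c00),
      (∀ m n : ℕ, m < n → FLt (I m) (I n)) ∧
      (∀ n, y n = ∑ i ∈ I n, c i • z i) ∧
      (∀ n, N (y n) = 1) ∧
      ∃ C : ℝ, 1 ≤ C ∧ ∀ a : ℕ →₀ ℝ,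
        (1 / C) * N (a.sum fun i t => t • Finsupp.single i (1 : ℝ)) ≤
          N (a.sum fun i t => t • y i) ∧
        N (a.sum fun i t => t • y i) ≤
          C * N (a.sum fun i t => t • Finsupp.single i (1 : ℝ)) := by
  obtain ⟨ν, k, u, I, c, hu, hI, hsum, hone⟩ := exists_isRapidlyIncreasing hN hz
  refine ⟨I, c, average u, fun m n => @hI m n, hsum, hone, 14, by norm_num, fun a => ?_⟩
  have hbasis : (a.sum fun i t => t • Finsupp.single i (1 : ℝ)) = a := by
    simp only [Finsupp.smul_single_one, Finsupp.sum_single]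
  rw [hbasis, ← Finsupp.linearCombination_apply]
  have hlower := hN.le_map_linearCombination hu.successive_average hone a
  exact ⟨by linarith [hN.map_nonneg a], hu.map_combination_le hN a⟩
end

section
/- Let g(x) = log₂(1 + x/2) and let ⟨⟨·⟩⟩ be a norm on c₀₀ satisfying ⟨⟨x⟩⟩ = max(‖x‖_{ℓ∞}, sup{ (1/g(ℓ)) Σ_{i=1}^ℓ ⟨⟨E_i(x)⟩⟩ : ℓ ≥ 3, E₁ < ⋯ < E_ℓ finite subsets of ℕ }) for all x ∈ c₀₀. For x ∈ c₀₀ and integer ℓ ≥ 3 set ⟨⟨x⟩⟩_ℓ = sup{ (1/g(ℓ)) Σ_{i=1}^ℓ ⟨⟨E_i(x)⟩⟩ : E₁ < ⋯ < E_ℓ }, and for real r ≥ 3 set ⟨⟨⟨x⟩⟩⟩_r = max(‖x‖_{ℓ∞}, sup{ ⟨⟨x⟩⟩_ℓ : ℓ ∈ ℕ, ℓ ≥ r }). Then there is a constant d̃ > 1 such that for every real r ≥ 3 with g(r) > d̃² and every x ∈ c₀₀ with ⟨⟨⟨x⟩⟩⟩_r ≠ ‖x‖_{ℓ∞}: ⟨⟨⟨x⟩⟩⟩_r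 ≤ (1/(1 − d̃/√g(r))) · sup{ (1/g(ℓ)) Σ_{i=1}^ℓ ⟨⟨⟨E_i(x)⟩⟩⟩_{r^{g(r)}} : ℓ ∈ ℕ, ℓ ≥ r, E₁ < ⋯ < E_ℓ }. -/
noncomputable def glog (x : ℝ) : ℝ := Real.logb 2 (1 + x / 2)

def gSet (Nb : c00 → ℝ) (x : c00) : Set ℝ :=
  {s | ∃ l : ℕ, 3 ≤ l ∧ ∃ E : Fin l → Finset ℕ,
    (∀ i j : Fin l, i < j → FLt (E i) (E j)) ∧
    s = (glog l)⁻¹ * ∑ i, Nb (proj (E i) x)}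

/-- `Nb` is a norm on `c₀₀` satisfying the implicit equation
`⟨⟨x⟩⟩ = max(‖x‖_{ℓ∞}, sup{(1/g(ℓ)) ∑ᵢ ⟨⟨Eᵢ(x)⟩⟩ : ℓ ≥ 3, E₁ < ⋯ < E_ℓ})`. -/
def IsGNorm (Nb : c00 → ℝ) : Prop :=
  IsNormC00 Nb ∧ ∀ x : c00, IsLUB (insert (supNorm x) (gSet Nb x)) (Nb x)

/-- `⟨⟨x⟩⟩_ℓ` : the supremum of `(1/g(ℓ)) ∑ᵢ ⟨⟨Eᵢ x⟩⟩` over `E₁ < ⋯ < E_ℓ`. -/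
noncomputable def gNormL (Nb : c00 → ℝ) (l : ℕ) (x : c00) : ℝ :=
  sSup {s | ∃ E : Fin l → Finset ℕ, (∀ i j : Fin l, i < j → FLt (E i) (E j)) ∧
    s = (glog l)⁻¹ * ∑ i, Nb (proj (E i) x)}

/-- `⟨⟨⟨x⟩⟩⟩_r = max(‖x‖_{ℓ∞}, sup {⟨⟨x⟩⟩_ℓ : ℓ ∈ ℕ, ℓ ≥ r})`. -/
noncomputable def gNormR (Nb : c00 → ℝ) (r : ℝ) (x : c00) : ℝ :=
  max (supNorm x) (sSup {s | ∃ l : ℕ, r ≤ (l : ℝ) ∧ s = gNormL Nb l x})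

/-!
Fix `s = √g(r)` and a sequence `E₁ < ⋯ < E_ℓ` with `ℓ ≥ r` that norms `x` in `⟨⟨⟨·⟩⟩⟩_r` up to
the factor `1 - 1/s`. A piece `y = E_i x` with `⟨⟨⟨y⟩⟩⟩_{r^{g(r)}} < ⟨⟨y⟩⟩` is almost normed by an
average of length `m < r^{g(r)}`, so `g(m) < s⁵`, and `g(m)` lies in one of the five intervals
`[s^k, s^{k+1}]`. Splitting all pieces of one such class multiplies their norms by a factor of order
`s^k`, whereas it increases `g` of the number of pieces by at most `s^{k+1} + 1`. As the total
stays below `g` of that number times `⟨⟨⟨x⟩⟩⟩_r`, each class carries at most a fraction `O(1/s)`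
of `g(ℓ) ⟨⟨⟨x⟩⟩⟩_r`, and discarding the five classes costs only the factor `1 - O(1/s)`.
-/

section Glog

theorem glog_le_glog {a b : ℝ} (ha : -2 < a) (hab : a ≤ b) : glog a ≤ glog b :=
  Real.logb_le_logb_of_le (by norm_num) (by linarith) (by linarith)

theorem five_quarters_le_glog {a : ℝ} (ha : 3 ≤ a) : 5 / 4 ≤ glog a := by
  refine le_trans ?_ (glog_le_glog (by norm_num) ha)
  have h : (5 : ℝ) ≤ 4 * glog 3 := calc
    (5 : ℝ) = Real.logb 2 (2 ^ 5) := by simp [Real.logb_pow]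
    _ ≤ Real.logb 2 ((1 + 3 / 2) ^ 4) :=
      Real.logb_le_logb_of_le (by norm_num) (by norm_num) (by norm_num)
    _ = 4 * glog 3 := by rw [Real.logb_pow]; rfl
  linarith

theorem glog_one_le_one : glog 1 ≤ 1 := by
  rw [glog, Real.logb_le_iff_le_rpow (by norm_num) (by norm_num)]
  norm_num

theorem glog_le_logb {a : ℝ} (ha : 2 ≤ a) : glog a ≤ Real.logb 2 a :=
  Real.logb_le_logb_of_le (by norm_num) (by linarith) (by linarith)

theorem logb_le_glog_add_one {a : ℝ} (ha : 0 < a) : Real.logb 2 a ≤ glog a + 1 := calc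
  Real.logb 2 a ≤ Real.logb 2 ((1 + a / 2) * 2) :=
    Real.logb_le_logb_of_le (by norm_num) ha (by linarith)
  _ = glog a + 1 := by
    rw [Real.logb_mul (by positivity) (by norm_num), Real.logb_self_eq_one (by norm_num)]; rfl

theorem le_rpow_glog {r : ℝ} (hr : 2 ≤ r) : r ≤ r ^ glog r := by
  have hg : 1 ≤ glog r := by
    rw [glog, Real.le_logb_iff_rpow_le (by norm_num) (by linarith), Real.rpow_one]
    linarith
  exact Real.self_le_rpow_of_one_le (by linarith) hg

theorem glog_rpow_glog_le {r : ℝ} (hr : 2 ≤ r) :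
    glog (r ^ glog r) ≤ glog r * (glog r + 1) := calc
  glog (r ^ glog r) ≤ Real.logb 2 (r ^ glog r) := glog_le_logb (hr.trans (le_rpow_glog hr))
  _ = glog r * Real.logb 2 r := Real.logb_rpow_eq_mul_logb_of_pos (by linarith)
  _ ≤ glog r * (glog r + 1) :=
    mul_le_mul_of_nonneg_left (logb_le_glog_add_one (by linarith))
      (Real.logb_nonneg (by norm_num) (by linarith))

theorem glog_sum_le {ι : Type*} [Fintype ι] {m : ι → ℝ} (hm : ∀ i, 0 ≤ m i) {C : ℝ} (hC : 0 ≤ C)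
    (hmC : ∀ i, glog (m i) ≤ C) : glog (∑ i, m i) ≤ glog (Fintype.card ι) + C + 1 := by
  have hm2 : ∀ i, m i ≤ 2 * 2 ^ C := fun i => by
    have h := (Real.logb_le_iff_le_rpow one_lt_two (by linarith [hm i])).1 (hmC i)
    linarith
  have hsum : ∑ i, m i ≤ Fintype.card ι * (2 * 2 ^ C) := by
    simpa using Finset.sum_le_card_nsmul Finset.univ m _ fun i _ => hm2 i
  have hone : (1 : ℝ) ≤ 2 ^ C := Real.one_le_rpow one_le_two hC
  calc glog (∑ i, m i) ≤ Real.logb 2 ((1 + (Fintype.card ι : ℝ) / 2) * 2 ^ C * 2) :=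
        Real.logb_le_logb_of_le one_lt_two
          (by linarith [Finset.sum_nonneg fun i (_ : i ∈ Finset.univ) => hm i]) (by linarith)
    _ = glog (Fintype.card ι) + C + 1 := by
      rw [Real.logb_mul (by positivity) (by norm_num),
        Real.logb_mul (by positivity) (by positivity), Real.logb_self_eq_one one_lt_two,
        Real.logb_rpow (by norm_num) (by norm_num)]
      rfl

end Glog

theorem supNorm_nonneg (x : c00) : 0 ≤ supNorm x :=
  Real.iSup_nonneg fun _ => abs_nonneg _

theorem proj_proj (A B : Finset ℕ) (x : c00) : proj A (proj B x) = proj (A ∩ B) x := by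
  ext i
  by_cases hA : i ∈ A <;> by_cases hB : i ∈ B <;> simp [proj, hA, hB]

/-- The relation `E₁ < E₂ < ⋯` for a family of finite sets indexed by an ordered type. The members
may be empty, and `FLt` is not transitive across empty sets, so all pairs are compared. -/
def IsSuccessive {ι : Type*} [LT ι] (E : ι → Finset ℕ) : Prop :=
  ∀ i j, i < j → FLt (E i) (E j)

namespace IsSuccessive

theorem const_empty {ι : Type*} [LT ι] : IsSuccessive fun _ : ι => (∅ : Finset ℕ) :=
  fun _ _ _ a ha => absurd ha (Finset.notMem_empty a)

theorem of_subsingleton {ι : Type*} [Preorder ι] [Subsingleton ι] (E : ι → Finset ℕ) :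
    IsSuccessive E :=
  fun i j hij => absurd (Subsingleton.elim i j) hij.ne

theorem sigmaLex {ι : Type*} [LT ι] {κ : ι → Type*} [∀ i, LT (κ i)]
    {E : ι → Finset ℕ} (hE : IsSuccessive E) {G : ∀ i, κ i → Finset ℕ}
    (hG : ∀ i, IsSuccessive (G i)) :
    IsSuccessive fun p : Σₗ i, κ i => G (ofLex p).1 (ofLex p).2 ∩ E (ofLex p).1 := by
  rintro ⟨i, j⟩ ⟨i', j'⟩ hlt a ha b hb
  obtain ⟨haG, haE⟩ := Finset.mem_inter.1 ha
  obtain ⟨hbG, hbE⟩ := Finset.mem_inter.1 hb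
  rcases Sigma.Lex.lt_def.1 hlt with hlt' | ⟨heq, hlt'⟩
  · exact hE i i' hlt' a haE b hbE
  · dsimp only at heq
    subst heq
    exact hG i j j' hlt' a haG b hbG

end IsSuccessive

/-- The averages `(1/g(ℓ)) ∑ᵢ F(Eᵢ x)` over `E₁ < ⋯ < E_ℓ` with `ℓ ≥ r`. -/
def averageSet (F : c00 → ℝ) (r : ℝ) (x : c00) : Set ℝ :=
  {t | ∃ l : ℕ, r ≤ (l : ℝ) ∧ ∃ E : Fin l → Finset ℕ, IsSuccessive E ∧
    t = (glog l)⁻¹ * ∑ i, F (proj (E i) x)}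

/-- The implicit equation of `⟨⟨·⟩⟩`, apart from the norm axioms. -/
def IsGSolution (N : c00 → ℝ) : Prop :=
  ∀ x : c00, IsLUB (insert (supNorm x) (gSet N x)) (N x)

/-- `⟨⟨y⟩⟩` is realised, up to the factor `9/10`, by an average of some length `m ≥ 3` with
`B ≤ g(m) ≤ C`. The factor `9/10` is chosen such that `9/10 g(m) - 1 ≥ g(m)/10`, which holds because
`g(m) ≥ 5/4`. -/
def IsAlmostNormed (N : c00 → ℝ) (B C : ℝ) (y : c00) : Prop :=
  ∃ m : ℕ, 3 ≤ m ∧ B ≤ glog m ∧ glog m ≤ C ∧ ∃ G : Fin m → Finset ℕ, IsSuccessive G ∧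
    9 / 10 * glog m * N y ≤ ∑ j, N (proj (G j) y)

variable {N : c00 → ℝ} {x y : c00} {r : ℝ} {l : ℕ}

theorem gNormR_nonneg (N : c00 → ℝ) (r : ℝ) (x : c00) : 0 ≤ gNormR N r x :=
  (supNorm_nonneg x).trans (le_max_left _ _)

theorem exists_lt_average_of_lt_gNormR {c : ℝ} (hx : gNormR N r x ≠ supNorm x)
    (hc : c < gNormR N r x) :
    ∃ l : ℕ, r ≤ l ∧ ∃ E : Fin l → Finset ℕ, IsSuccessive E ∧
      c < (glog l)⁻¹ * ∑ i, N (proj (E i) x) := by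
  rw [gNormR, (max_choice _ _).resolve_left hx] at hc
  obtain ⟨n, hn⟩ := exists_nat_ge r
  obtain ⟨_, ⟨l, hl, rfl⟩, hcl⟩ := exists_lt_of_lt_csSup (by exact ⟨_, n, hn, rfl⟩) hc
  obtain ⟨_, ⟨E, hE, rfl⟩, hcE⟩ :=
    exists_lt_of_lt_csSup (by exact ⟨_, fun _ => ∅, IsSuccessive.const_empty, rfl⟩) hcl
  exact ⟨l, hl, E, hE, hcE⟩

namespace IsGSolution

theorem supNorm_le (h : IsGSolution N) (x : c00) : supNorm x ≤ N x :=
  (h x).1 (Set.mem_insert _ _)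

theorem nonneg (h : IsGSolution N) (x : c00) : 0 ≤ N x :=
  (supNorm_nonneg x).trans (h.supNorm_le x)

theorem average_le (h : IsGSolution N) (hl : 3 ≤ l) {E : Fin l → Finset ℕ}
    (hE : IsSuccessive E) : (glog l)⁻¹ * ∑ i, N (proj (E i) x) ≤ N x :=
  (h x).1 (Set.mem_insert_of_mem _ ⟨l, hl, E, hE, rfl⟩)

theorem gNormL_le (h : IsGSolution N) (hl : 3 ≤ l) : gNormL N l x ≤ N x := by
  refine csSup_le ⟨_, fun _ => ∅, IsSuccessive.const_empty, rfl⟩ ?_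
  rintro _ ⟨E, hE, rfl⟩
  exact h.average_le hl hE

theorem average_le_gNormL (h : IsGSolution N) (hl : 3 ≤ l) {E : Fin l → Finset ℕ}
    (hE : IsSuccessive E) : (glog l)⁻¹ * ∑ i, N (proj (E i) x) ≤ gNormL N l x := by
  refine le_csSup ⟨N x, ?_⟩ ⟨E, hE, rfl⟩
  rintro _ ⟨E', hE', rfl⟩
  exact h.average_le hl hE'

theorem gNormR_le (h : IsGSolution N) (hr : 3 ≤ r) (x : c00) : gNormR N r x ≤ N x := by
  obtain ⟨n, hn⟩ := exists_nat_ge r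
  refine max_le (h.supNorm_le x) (csSup_le ⟨_, n, hn, rfl⟩ ?_)
  rintro _ ⟨l, hl, rfl⟩
  exact h.gNormL_le (by exact_mod_cast hr.trans hl)

theorem gNormL_le_gNormR (h : IsGSolution N) (hr : 3 ≤ r) (hl : r ≤ l) :
    gNormL N l x ≤ gNormR N r x := by
  refine le_max_of_le_right (le_csSup ⟨N x, ?_⟩ ⟨l, hl, rfl⟩)
  rintro _ ⟨l', hl', rfl⟩
  exact h.gNormL_le (by exact_mod_cast hr.trans hl')

theorem bddAbove_averageSet (h : IsGSolution N) {F : c00 → ℝ} (hF : ∀ y, F y ≤ N y)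
    (hr : 3 ≤ r) : BddAbove (averageSet F r x) := by
  refine ⟨N x, ?_⟩
  rintro _ ⟨l, hl, E, hE, rfl⟩
  have hg := five_quarters_le_glog (hr.trans hl)
  calc (glog l)⁻¹ * ∑ i, F (proj (E i) x) ≤ (glog l)⁻¹ * ∑ i, N (proj (E i) x) := by
        gcongr
        exact hF _
    _ ≤ N x := h.average_le (by exact_mod_cast hr.trans hl) hE

section Refinement

variable {ι : Type*} [Fintype ι] [LinearOrder ι] {E : ι → Finset ℕ}

theorem sum_proj_le (h : IsGSolution N) (hr : 3 ≤ r) (hι : r ≤ Fintype.card ι)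
    (hE : IsSuccessive E) :
    ∑ i, N (proj (E i) x) ≤ glog (Fintype.card ι) * gNormR N r x := by
  let e := Fintype.orderIsoFinOfCardEq ι rfl
  have hEe : IsSuccessive fun k => E (e k) := fun _ _ hij => hE _ _ (e.strictMono hij)
  have havg := (h.average_le_gNormL (x := x) (by exact_mod_cast hr.trans hι) hEe).trans
    (h.gNormL_le_gNormR hr hι)
  have hsum : ∑ k, N (proj (E (e k)) x) = ∑ i, N (proj (E i) x) :=
    Equiv.sum_comp e.toEquiv fun i => N (proj (E i) x)
  have hg := five_quarters_le_glog (hr.trans hι)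
  rwa [hsum, inv_mul_le_iff₀ (by linarith)] at havg

theorem sum_sum_proj_proj_le (h : IsGSolution N) (hr : 3 ≤ r) (hι : r ≤ Fintype.card ι)
    (hE : IsSuccessive E) {m : ι → ℕ} (hm : ∀ i, 1 ≤ m i) {G : ∀ i, Fin (m i) → Finset ℕ}
    (hG : ∀ i, IsSuccessive (G i)) :
    ∑ i, ∑ j, N (proj (G i j) (proj (E i) x)) ≤ glog (∑ i, (m i : ℝ)) * gNormR N r x := by
  have hcard : (Fintype.card (Σₗ i, Fin (m i)) : ℝ) = ∑ i, (m i : ℝ) := by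
    rw [Fintype.card_congr (ofLex : (Σₗ i, Fin (m i)) ≃ _), Fintype.card_sigma]
    simp
  have hcard_le : (Fintype.card ι : ℝ) ≤ ∑ i, (m i : ℝ) := by
    simpa using Finset.card_nsmul_le_sum Finset.univ (fun i => (m i : ℝ)) 1
      fun i _ => by exact_mod_cast hm i
  have hsum : ∑ p : (Σₗ i, Fin (m i)), N (proj (G (ofLex p).1 (ofLex p).2 ∩ E (ofLex p).1) x) =
      ∑ i, ∑ j, N (proj (G i j ∩ E i) x) := by
    rw [← Fintype.sum_sigma' fun i j => N (proj (G i j ∩ E i) x)]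
    exact Equiv.sum_comp (ofLex : (Σₗ i, Fin (m i)) ≃ _)
      fun p => N (proj (G p.1 p.2 ∩ E p.1) x)
  simp only [proj_proj]
  rw [← hsum, ← hcard]
  exact h.sum_proj_le hr (hcard ▸ hι.trans hcard_le) (hE.sigmaLex hG)

theorem sum_add_sum_isAlmostNormed_le (h : IsGSolution N) (hr : 3 ≤ r)
    (hι : r ≤ Fintype.card ι) (hE : IsSuccessive E) {B C : ℝ} (hC : 1 ≤ C) {A : Finset ι}
    (hA : ∀ i ∈ A, IsAlmostNormed N B C (proj (E i) x)) :
    ∑ i, N (proj (E i) x) + B / 10 * ∑ i ∈ A, N (proj (E i) x) ≤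
      (glog (Fintype.card ι) + C + 1) * gNormR N r x := by
  have hsplit : ∀ i, ∃ m : ℕ, 1 ≤ m ∧ glog m ≤ C ∧ ∃ G : Fin m → Finset ℕ, IsSuccessive G ∧
      N (proj (E i) x) + (if i ∈ A then B / 10 * N (proj (E i) x) else 0) ≤
        ∑ j, N (proj (G j) (proj (E i) x)) := by
    intro i
    by_cases hi : i ∈ A
    · obtain ⟨m, hm, hBm, hmC, G, hG, hsum⟩ := hA i hi
      refine ⟨m, by lia, hmC, G, hG, le_trans ?_ hsum⟩
      have hg := five_quarters_le_glog (a := m) (by exact_mod_cast hm)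
      rw [if_pos hi, ← one_add_mul]
      exact mul_le_mul_of_nonneg_right (by linarith) (h.nonneg _)
    · refine ⟨1, le_rfl, by simpa using glog_one_le_one.trans hC, fun _ => E i,
        IsSuccessive.of_subsingleton _, ?_⟩
      simp [hi, proj_proj]
  choose m hm hmC G hG hsum using hsplit
  calc ∑ i, N (proj (E i) x) + B / 10 * ∑ i ∈ A, N (proj (E i) x)
      = ∑ i, (N (proj (E i) x) + if i ∈ A then B / 10 * N (proj (E i) x) else 0) := by
        rw [Finset.sum_add_distrib, Finset.sum_ite_mem, Finset.univ_inter, Finset.mul_sum]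
    _ ≤ ∑ i, ∑ j, N (proj (G i j) (proj (E i) x)) := Finset.sum_le_sum fun i _ => hsum i
    _ ≤ glog (∑ i, (m i : ℝ)) * gNormR N r x := h.sum_sum_proj_proj_le hr hι hE hm hG
    _ ≤ (glog (Fintype.card ι) + C + 1) * gNormR N r x :=
      mul_le_mul_of_nonneg_right
        (glog_sum_le (fun i => Nat.cast_nonneg (m i)) (by linarith) hmC) (gNormR_nonneg N r x)

end Refinement

theorem exists_isAlmostNormed_pow (h : IsGSolution N) {R s : ℝ} {n : ℕ} (hR : 3 ≤ R)
    (hs : 1 < s) (hRs : glog R < s ^ n) (hy : gNormR N R y < N y) :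
    ∃ k < n, IsAlmostNormed N (s ^ k) (s ^ (k + 1)) y := by
  have hsup : supNorm y ≤ gNormR N R y := le_max_left _ _
  have hlt : max (gNormR N R y) (9 / 10 * N y) < N y :=
    max_lt hy (by linarith [gNormR_nonneg N R y])
  obtain ⟨t, ht, hmax, -⟩ := (h y).exists_between hlt
  obtain ⟨hRt, hNt⟩ := max_lt_iff.1 hmax
  rcases ht with rfl | ⟨m, hm, G, hG, rfl⟩
  · exact absurd hRt hsup.not_gt
  have hg := five_quarters_le_glog (a := m) (by exact_mod_cast hm)
  have hmR : (m : ℝ) < R := by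
    by_contra! hRm
    exact hRt.not_ge ((h.average_le_gNormL hm hG).trans (h.gNormL_le_gNormR hR hRm))
  obtain ⟨k, hkm, hmk⟩ := exists_nat_pow_near (by linarith : 1 ≤ glog m) hs
  have hkn : s ^ k < s ^ n :=
    hkm.trans_lt ((glog_le_glog (by linarith [(Nat.cast_nonneg m : (0 : ℝ) ≤ m)]) hmR.le).trans_lt
      hRs)
  rw [lt_inv_mul_iff₀ (by linarith)] at hNt
  exact ⟨k, (pow_lt_pow_iff_right₀ hs).1 hkn, m, hm, hkm, hmk.le, G, hG, by linarith⟩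

open scoped Classical in
theorem le_gNormR_add_sum_isAlmostNormed (h : IsGSolution N) {R s : ℝ} {n : ℕ} (hR : 3 ≤ R)
    (hs : 1 < s) (hRs : glog R < s ^ n) (y : c00) :
    N y ≤ gNormR N R y +
      ∑ k ∈ Finset.range n, if IsAlmostNormed N (s ^ k) (s ^ (k + 1)) y then N y else 0 := by
  have hterm : ∀ k ∈ Finset.range n,
      0 ≤ if IsAlmostNormed N (s ^ k) (s ^ (k + 1)) y then N y else 0 := fun k _ => by
    split_ifs
    exacts [h.nonneg y, le_rfl]
  rcases le_or_gt (N y) (gNormR N R y) with hgood | hbad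
  · exact le_add_of_le_of_nonneg hgood (Finset.sum_nonneg hterm)
  · obtain ⟨k, hk, hky⟩ := h.exists_isAlmostNormed_pow hR hs hRs hbad
    have hle := Finset.single_le_sum hterm (Finset.mem_range.2 hk)
    rw [if_pos hky] at hle
    exact le_add_of_nonneg_of_le (gNormR_nonneg N R y) hle

section AlmostNorming

variable {s : ℝ} {E : Fin l → Finset ℕ}

open scoped Classical in
theorem sum_isAlmostNormed_pow_le (h : IsGSolution N) (hr : 3 ≤ r) (hl : r ≤ l)
    (hE : IsSuccessive E) (hs : 1 ≤ s) (hsl : s ^ 2 ≤ glog l)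
    (hsum : (1 - 1 / s) * gNormR N r x * glog l ≤ ∑ i, N (proj (E i) x)) (k : ℕ) :
    ∑ i, (if IsAlmostNormed N (s ^ k) (s ^ (k + 1)) (proj (E i) x) then N (proj (E i) x) else 0) ≤
      30 * (gNormR N r x * glog l / s) := by
  rw [← Finset.sum_filter]
  set M := gNormR N r x
  set V := M * glog l / s with hV
  set Q := ∑ i with IsAlmostNormed N (s ^ k) (s ^ (k + 1)) (proj (E i) x), N (proj (E i) x)
  have hM : 0 ≤ M := gNormR_nonneg N r x
  have hsk : 1 ≤ s ^ k := one_le_pow₀ hs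
  have hsplit : ∑ i, N (proj (E i) x) + s ^ k / 10 * Q ≤ (glog l + s ^ (k + 1) + 1) * M := by
    simpa using h.sum_add_sum_isAlmostNormed_le hr (by simpa using hl) hE (one_le_pow₀ hs)
      fun i hi => (Finset.mem_filter.1 hi).2
  have hMsV : M * s ≤ V := by
    rw [hV, le_div_iff₀ (by linarith)]
    nlinarith
  have hMV : M ≤ V := (le_mul_of_one_le_right hM hs).trans hMsV
  have hloss : (1 - 1 / s) * M * glog l = glog l * M - V := by rw [hV]; ring
  have hgain : s ^ k / 10 * Q ≤ s ^ k * (3 * V) := calc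
    s ^ k / 10 * Q ≤ V + s ^ k * (M * s) + M := by
      rw [pow_succ] at hsplit
      linarith
    _ ≤ s ^ k * V + s ^ k * V + s ^ k * V := by
      gcongr
      · exact le_mul_of_one_le_left (hM.trans hMV) hsk
      · exact hMV.trans (le_mul_of_one_le_left (hM.trans hMV) hsk)
    _ = s ^ k * (3 * V) := by ring
  have hQ : s ^ k * Q ≤ s ^ k * (30 * V) := by linarith
  exact le_of_mul_le_mul_left hQ (by linarith)

theorem one_sub_mul_gNormR_le_average (h : IsGSolution N) {R : ℝ} {n : ℕ} (hr : 3 ≤ r)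
    (hR : 3 ≤ R) (hl : r ≤ l) (hE : IsSuccessive E) (hs : 1 < s) (hsl : s ^ 2 ≤ glog l)
    (hRs : glog R < s ^ n)
    (hsum : (1 - 1 / s) * gNormR N r x * glog l ≤ ∑ i, N (proj (E i) x)) :
    (1 - (30 * n + 1) / s) * gNormR N r x ≤
      (glog l)⁻¹ * ∑ i, gNormR N R (proj (E i) x) := by
  classical
  have hg := five_quarters_le_glog (hr.trans hl)
  have hclasses : ∑ i, N (proj (E i) x) ≤
      ∑ i, gNormR N R (proj (E i) x) + n * (30 * (gNormR N r x * glog l / s)) := calc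
    ∑ i, N (proj (E i) x)
        ≤ ∑ i, (gNormR N R (proj (E i) x) + ∑ k ∈ Finset.range n,
            if IsAlmostNormed N (s ^ k) (s ^ (k + 1)) (proj (E i) x)
              then N (proj (E i) x) else 0) :=
          Finset.sum_le_sum fun i _ => h.le_gNormR_add_sum_isAlmostNormed hR hs hRs _
    _ ≤ _ := by
      rw [Finset.sum_add_distrib, Finset.sum_comm]
      gcongr
      simpa using Finset.sum_le_card_nsmul (Finset.range n) _ _ fun k _ =>
        h.sum_isAlmostNormed_pow_le hr hl hE hs.le hsl hsum k
  rw [le_inv_mul_iff₀ (by linarith)]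
  calc glog l * ((1 - (30 * n + 1) / s) * gNormR N r x)
      = (1 - 1 / s) * gNormR N r x * glog l - n * (30 * (gNormR N r x * glog l / s)) := by ring
    _ ≤ ∑ i, gNormR N R (proj (E i) x) := by linarith

end AlmostNorming

theorem one_sub_mul_gNormR_le_sSup (h : IsGSolution N) {R s : ℝ} {n : ℕ} (hr : 3 ≤ r)
    (hR : 3 ≤ R) (hs : 1 < s) (hsr : s ^ 2 ≤ glog r) (hRs : glog R < s ^ n)
    (hx : gNormR N r x ≠ supNorm x) :
    (1 - (30 * n + 1) / s) * gNormR N r x ≤ sSup (averageSet (gNormR N R) r x) := by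
  have hM : 0 < gNormR N r x := (supNorm_nonneg x).trans_lt ((le_max_left _ _).lt_of_ne' hx)
  have hlt : (1 - 1 / s) * gNormR N r x < gNormR N r x :=
    mul_lt_of_lt_one_left hM (sub_lt_self 1 (by positivity))
  obtain ⟨l, hl, E, hE, hlE⟩ := exists_lt_average_of_lt_gNormR hx hlt
  have hsl : s ^ 2 ≤ glog l := hsr.trans (glog_le_glog (by linarith) hl)
  rw [lt_inv_mul_iff₀' (by linarith [five_quarters_le_glog (hr.trans hl)])] at hlE
  exact (h.one_sub_mul_gNormR_le_average hr hR hl hE hs hsl hRs hlE.le).trans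
    (le_csSup (h.bddAbove_averageSet (h.gNormR_le hR) hr) ⟨l, hl, E, hE, rfl⟩)

end IsGSolution

/-- the analogue of Lemma 2.6 for the norm implicitly defined via
`g(x) = log₂(1 + x/2)` with `ℓ ≥ 3`. -/
theorem g_character_lemma
    (Nb : c00 → ℝ) (hNb : IsGNorm Nb) :
    ∃ d : ℝ, 1 < d ∧ ∀ r : ℝ, 3 ≤ r → d ^ 2 < glog r →
      ∀ x : c00, gNormR Nb r x ≠ supNorm x →
        gNormR Nb r x ≤ (1 - d / Real.sqrt (glog r))⁻¹ *
          sSup {s | ∃ l : ℕ, r ≤ (l : ℝ) ∧ ∃ E : Fin l → Finset ℕ,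
            (∀ i j : Fin l, i < j → FLt (E i) (E j)) ∧
            s = (glog l)⁻¹ * ∑ i, gNormR Nb (r ^ glog r) (proj (E i) x)} := by
  refine ⟨151, by norm_num, fun r hr hd x hx => ?_⟩
  have hs : 151 < √(glog r) := Real.lt_sqrt_of_sq_lt hd
  have hsq : √(glog r) ^ 2 = glog r := Real.sq_sqrt (by linarith)
  have hR : 3 ≤ r ^ glog r := hr.trans (le_rpow_glog (by linarith))
  have hRs : glog (r ^ glog r) < √(glog r) ^ 5 := calc
    glog (r ^ glog r) ≤ glog r * (glog r + 1) := glog_rpow_glog_le (by linarith)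
    _ < √(glog r) * glog r ^ 2 := by nlinarith
    _ = √(glog r) * (√(glog r) ^ 2) ^ 2 := by rw [hsq]
    _ = √(glog r) ^ 5 := by ring
  rw [le_inv_mul_iff₀ (sub_pos.2 ((div_lt_one (by linarith)).2 hs))]
  have hd_eq : (151 : ℝ) = 30 * (5 : ℕ) + 1 := by norm_num
  rw [hd_eq]
  exact IsGSolution.one_sub_mul_gNormR_le_sSup hNb.2 hr hR (by linarith) hsq.le hRs hx
end
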